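/- Let G be a finite non-cyclic nilpotent group and let p be the smallest prime divisor of |G|. Then the Noether number satisfies β(G) ≤ |G|/p + p − 1, except when p = 2 and G is a dicyclic group, in which case β(G) = |G|/2 + 2. -/

import Mathlib

open MvPolynomial

/-- The action of a group element on polynomial functions, induced by a linear
representation `ρ` on the variables. -/
noncomputable def polyAct {F : Type*} [Field F] {G : Type*} [Group G] {d : ℕ}
    (ρ : G →* Matrix.GeneralLinearGroup (Fin d) F) (g : G)
    (f : MvPolynomial (Fin d) F) : MvPolynomial (Fin d) F :=
  MvPolynomial.aeval (fun i => ∑ j, ((ρ g).val i j) • (MvPolynomial.X j)) f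

/-- A polynomial invariant of the representation `ρ`. -/
def IsPolyInvariant {F : Type*} [Field F] {G : Type*} [Group G] {d : ℕ}
    (ρ : G →* Matrix.GeneralLinearGroup (Fin d) F)
    (f : MvPolynomial (Fin d) F) : Prop :=
  ∀ g : G, polyAct ρ g f = f

/-- `β(G, V) ≤ s`: the invariant ring is generated as an algebra by its
invariants of degree at most `s`. -/
def NoetherBoundLe {F : Type*} [Field F] {G : Type*} [Group G] {d : ℕ}
    (ρ : G →* Matrix.GeneralLinearGroup (Fin d) F) (s : ℕ) : Prop :=
  ∀ f : MvPolynomial (Fin d) F, IsPolyInvariant ρ f →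
    f ∈ Algebra.adjoin F
      {h : MvPolynomial (Fin d) F | IsPolyInvariant ρ h ∧ h.totalDegree ≤ s}

/-- `G` is a dicyclic group `Dic_{4n} = ⟨a, b | a^{2n} = 1, b² = aⁿ, bab⁻¹ = a⁻¹⟩`. -/
def IsDicyclic (G : Type*) [Group G] : Prop :=
  ∃ (a b : G) (n : ℕ), 1 < n ∧ orderOf a = 2 * n ∧ b ^ 2 = a ^ n ∧
    b * a * b⁻¹ = a⁻¹ ∧ Subgroup.closure ({a, b} : Set G) = ⊤

/-!
For a subgroup `H`, Benson's lemma puts the `[G : H]`-th power of the Hilbert ideal of `H` into the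
Hilbert ideal of `G`. Hence `β(G) ≤ s` as soon as the Reynolds operator of `H` maps all homogeneous
polynomials of degree greater than `s` into the `([G : H] + 1)`-st power of the Hilbert ideal of
`H`. A non-cyclic nilpotent group contains a subgroup `H` isomorphic to `C_p × C_p` or to
`Q₈ × C_q` with `q` odd, and in the latter case `q ≥ 3` is possible unless the group is dicyclic.
For `C_p × C_p` a monomial in eigenvectors is governed by the sequence of its weights, and zero-sum
theory cuts this sequence into sufficiently many zero-sum blocks. For `Q₈ × C_q` the products of
the two-dimensional representation are expanded in the four bilinear forms given by the Pauli
matrices. This leads to sequences over `C_2 × C_2 × C_q`, and the symmetry of three of the four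
forms allows the factors of a product to be permuted until enough blocks appear.

For the lower bound, let `ζ` be a primitive `2n`-th root of unity and let the dicyclic group of
order `4n` act by `a = diag(ζ, ζ⁻¹)` and `b = ((0, 1), (-1, 0))`. All invariants of degree at most
`2n + 1` are symmetric under exchange of the two variables, whereas
`x ^ (2n + 1) y - x y ^ (2n + 1)` is an antisymmetric invariant. The regular representation
transports this example to a field that does not contain `ζ`.
-/

namespace NoetherNumber

open Finset

/-! ### Zero-sum sequences -/

section ZeroSum

variable {ι A B : Type*} [AddCommMonoid A] [AddCommMonoid B]

/-- The colour classes of `c` cut `S` into nonempty blocks on each of which `w` sums to zero. -/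
def IsZeroSumColoring {κ : Type*} [DecidableEq κ] (w : ι → A) (S : Finset ι) (c : ι → κ) : Prop :=
  ∀ k, {i ∈ S | c i = k}.Nonempty ∧ ∑ i ∈ S with c i = k, w i = 0

/-- The sequence `w` restricted to `S` splits into `n` nonempty zero-sum subsequences. -/
def HasZeroSumPartition (w : ι → A) (n : ℕ) (S : Finset ι) : Prop :=
  ∃ c : ι → Fin n, IsZeroSumColoring w S c

/-- The sequence `w` restricted to `S` has no nonempty zero-sum subsequence. -/
def IsZeroSumFree (w : ι → A) (S : Finset ι) : Prop :=
  ∀ T ⊆ S, T.Nonempty → ∑ i ∈ T, w i ≠ 0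

theorem HasZeroSumPartition.one {w : ι → A} {S : Finset ι} (hS : S.Nonempty)
    (h : ∑ i ∈ S, w i = 0) : HasZeroSumPartition w 1 S :=
  ⟨fun _ => 0, fun k => by simp [Subsingleton.elim 0 k, hS, h]⟩

theorem HasZeroSumPartition.cons [DecidableEq ι] {w : ι → A} {S T : Finset ι} {n : ℕ}
    (hTS : T ⊆ S) (hT : T.Nonempty) (h : ∑ i ∈ T, w i = 0)
    (hn : HasZeroSumPartition w n (S \ T)) : HasZeroSumPartition w (n + 1) S := by
  obtain ⟨c, hc⟩ := hn
  refine ⟨fun i => if i ∈ T then 0 else (c i).succ, Fin.cases ?_ fun k => ?_⟩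
  · have hclass : {i ∈ S | (if i ∈ T then (0 : Fin (n + 1)) else (c i).succ) = 0} = T := by
      ext i
      by_cases hi : i ∈ T <;> simp [hi, @hTS i]
    rw [hclass]
    exact ⟨hT, h⟩
  · have hclass : {i ∈ S | (if i ∈ T then (0 : Fin (n + 1)) else (c i).succ) = k.succ} =
        {i ∈ S \ T | c i = k} := by
      ext i
      by_cases hi : i ∈ T <;> simp [hi, (Fin.succ_ne_zero k).symm]
    rw [hclass]
    exact hc k

theorem sum_filter_comp_eq {κ μ : Type*} [Fintype κ] [DecidableEq κ] [DecidableEq μ]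
    (S : Finset ι) (c : ι → κ) (d : κ → μ) (m : μ) (f : ι → A) :
    ∑ i ∈ S with d (c i) = m, f i = ∑ k with d k = m, ∑ i ∈ S with c i = k, f i := by
  rw [← sum_fiberwise_of_maps_to (g := c) (t := {k | d k = m}) (by simp)]
  refine sum_congr rfl fun k hk => sum_congr ?_ fun _ _ => rfl
  ext i
  simp only [mem_filter, mem_univ, true_and] at hk ⊢
  grind

theorem IsZeroSumColoring.comp {s : ι → A} {t : ι → B} {S : Finset ι} {κ : Type*} [Fintype κ]
    [DecidableEq κ] {n : ℕ} {c : ι → κ} (hc : IsZeroSumColoring s S c)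
    (ht : HasZeroSumPartition (fun k => ∑ i ∈ S with c i = k, t i) n univ) :
    HasZeroSumPartition (fun i => (s i, t i)) n S := by
  obtain ⟨d, hd⟩ := ht
  refine ⟨d ∘ c, fun m => ⟨?_, Prod.ext ?_ ?_⟩⟩
  · obtain ⟨k, hk⟩ := (hd m).1
    obtain ⟨i, hi⟩ := (hc k).1
    simp only [mem_filter, mem_univ, true_and] at hi hk
    exact ⟨i, by simp [hi, hk]⟩
  · exact Prod.fst_sum.trans ((sum_filter_comp_eq S c d m s).trans
      (sum_eq_zero fun k _ => (hc k).2))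
  · exact Prod.snd_sum.trans ((sum_filter_comp_eq S c d m t).trans (hd m).2)

end ZeroSum

section Davenport

variable {ι A : Type*} [AddCommGroup A] {w : ι → A} {S T : Finset ι}

theorem sum_sdiff_eq_zero [DecidableEq ι] (hTS : T ⊆ S) (hT : ∑ i ∈ T, w i = 0)
    (hS : ∑ i ∈ S, w i = 0) : ∑ i ∈ S \ T, w i = 0 := by
  rw [sum_sdiff_eq_sub hTS, hS, hT, sub_zero]

/-- The set `Σ(S)` of sums of nonempty subsequences of `w` restricted to `S`. -/
def subsetSums [DecidableEq A] (w : ι → A) (S : Finset ι) : Finset A :=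
  {T ∈ S.powerset | T.Nonempty}.image fun T => ∑ i ∈ T, w i

variable [DecidableEq A]

theorem mem_subsetSums {x : A} :
    x ∈ subsetSums w S ↔ ∃ T ⊆ S, T.Nonempty ∧ ∑ i ∈ T, w i = x := by
  simp [subsetSums, and_assoc]

theorem IsZeroSumFree.card_subsetSums_lt [Fintype A] (hS : IsZeroSumFree w S) :
    #(subsetSums w S) < Fintype.card A := by
  refine card_lt_univ_of_notMem (x := 0) fun h => ?_
  obtain ⟨T, hTS, hT, h0⟩ := mem_subsetSums.1 h
  exact hS T hTS hT h0

-- The total sum over `insert a S` is a new subset sum: the complement of a subset of `S` with the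
-- same sum would be a zero-sum subset containing `a`.
theorem IsZeroSumFree.card_subsetSums_insert [DecidableEq ι] {a : ι} (ha : a ∉ S)
    (h : IsZeroSumFree w (insert a S)) : #(subsetSums w S) + 1 ≤ #(subsetSums w (insert a S)) := by
  have hnew : ∑ i ∈ insert a S, w i ∉ subsetSums w S := fun hmem => by
    obtain ⟨T, hTS, -, hT⟩ := mem_subsetSums.1 hmem
    refine h (insert a S \ T) sdiff_subset ⟨a, by grind⟩ ?_
    rw [sum_sdiff_eq_sub (hTS.trans (subset_insert a S)), hT, sub_self]
  rw [← card_insert_of_notMem hnew]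
  refine card_le_card (insert_subset (mem_subsetSums.2
    ⟨_, subset_rfl, insert_nonempty a S, rfl⟩) fun x hx => ?_)
  obtain ⟨T, hTS, hT⟩ := mem_subsetSums.1 hx
  exact mem_subsetSums.2 ⟨T, hTS.trans (subset_insert a S), hT⟩

theorem IsZeroSumFree.card_subsetSums_add_card_sdiff_le [DecidableEq ι] (hTS : T ⊆ S)
    (hS : IsZeroSumFree w S) : #(subsetSums w T) + #(S \ T) ≤ #(subsetSums w S) := by
  suffices ∀ U, Disjoint U T → IsZeroSumFree w (U ∪ T) →
      #(subsetSums w T) + #U ≤ #(subsetSums w (U ∪ T)) by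
    simpa [sdiff_union_of_subset hTS] using
      this (S \ T) sdiff_disjoint (by rwa [sdiff_union_of_subset hTS])
  intro U
  induction U using Finset.induction_on with
  | empty => simp
  | insert a U ha ih =>
    intro hdisj hfree
    rw [disjoint_insert_left] at hdisj
    rw [insert_union] at hfree ⊢
    have hle := ih hdisj.2 fun V hV => hfree V (hV.trans (subset_insert _ _))
    have hlt := hfree.card_subsetSums_insert (by simp [ha, hdisj.1])
    rw [card_insert_of_notMem ha]
    omega

end Davenport

section GeneralizedDavenport

variable {ι A : Type*} [AddCommGroup A] {w : ι → A} {S T : Finset ι}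

theorem not_isZeroSumFree : ¬ IsZeroSumFree w S ↔ ∃ T ⊆ S, T.Nonempty ∧ ∑ i ∈ T, w i = 0 := by
  simp [IsZeroSumFree]

theorem exists_zero_sum_subset [Fintype A] (hS : Fintype.card A ≤ #S) :
    ∃ T ⊆ S, T.Nonempty ∧ ∑ i ∈ T, w i = 0 := by
  classical
  refine not_isZeroSumFree.1 fun hfree => ?_
  have hle := hfree.card_subsetSums_add_card_sdiff_le (empty_subset S)
  have hlt := hfree.card_subsetSums_lt
  simp only [sdiff_empty] at hle
  omega

theorem exists_zero_sum_subset_of_ne [Fintype A] {i j : ι} (hi : i ∈ S) (hj : j ∈ S)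
    (hij : w i ≠ w j) (hS : Fintype.card A ≤ #S + 1) :
    ∃ T ⊆ S, T.Nonempty ∧ ∑ i ∈ T, w i = 0 := by
  classical
  refine not_isZeroSumFree.1 fun hfree => ?_
  have hne : i ≠ j := fun h => hij (h ▸ rfl)
  have hpair : {i, j} ⊆ S := by grind
  have hwi : w i ≠ 0 := by simpa using hfree {i} (by simpa) (by simp)
  have hwj : w j ≠ 0 := by simpa using hfree {j} (by simpa) (by simp)
  have hthree : #({w i, w j, w i + w j} : Finset A) = 3 :=
    card_eq_three.2 ⟨_, _, _, hij, by simpa using hwj, by simpa using hwi, rfl⟩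
  have hsub : {w i, w j, w i + w j} ⊆ subsetSums w {i, j} := fun x hx => by
    simp only [mem_insert, mem_singleton] at hx
    rcases hx with rfl | rfl | rfl
    · exact mem_subsetSums.2 ⟨{i}, by simp, by simp, by simp⟩
    · exact mem_subsetSums.2 ⟨{j}, by simp, by simp, by simp⟩
    · exact mem_subsetSums.2 ⟨{i, j}, subset_rfl, by simp, sum_pair hne⟩
  have hle := hfree.card_subsetSums_add_card_sdiff_le hpair
  have hlt := hfree.card_subsetSums_lt
  have hthree_le := card_le_card hsub
  rw [card_sdiff_of_subset hpair, card_pair hne] at hle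
  have := (card_pair hne).symm.trans_le (card_le_card hpair)
  omega

theorem hasZeroSumPartition_of_card_mul_lt [Fintype A] {n : ℕ} (hS : Fintype.card A * n < #S)
    (h : ∑ i ∈ S, w i = 0) : HasZeroSumPartition w (n + 1) S := by
  classical
  induction n generalizing S with
  | zero => exact .one (card_pos.1 (by omega)) h
  | succ n ih =>
    have hA : 0 < Fintype.card A := Fintype.card_pos
    rw [Nat.mul_succ] at hS
    obtain ⟨S', hS', hcard⟩ := exists_subset_card_eq (s := S) (n := Fintype.card A) (by omega)
    obtain ⟨T, hT, hne, hsum⟩ := exists_zero_sum_subset (w := w) hcard.ge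
    have hTcard := card_le_card hT
    refine .cons (hT.trans hS') hne hsum (ih ?_ (sum_sdiff_eq_zero (hT.trans hS') hsum h))
    rw [card_sdiff_of_subset (hT.trans hS')]
    omega

-- A zero-sum subset shorter than `|A|` leaves enough terms for the remaining `n` blocks.
theorem hasZeroSumPartition_of_short [Fintype A] {n : ℕ} (hn : 1 ≤ n)
    (hS : #S = Fintype.card A * n) (h : ∑ i ∈ S, w i = 0) (hTS : T ⊆ S) (hT : T.Nonempty)
    (hT0 : ∑ i ∈ T, w i = 0) (hTA : #T < Fintype.card A) : HasZeroSumPartition w (n + 1) S := by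
  classical
  obtain ⟨n, rfl⟩ := Nat.exists_eq_add_of_le' hn
  refine .cons hTS hT hT0
    (hasZeroSumPartition_of_card_mul_lt ?_ (sum_sdiff_eq_zero hTS hT0 h))
  rw [card_sdiff_of_subset hTS, hS, Nat.mul_succ]
  omega

theorem eq_of_not_hasZeroSumPartition [Fintype A] {n : ℕ} (hA : 3 ≤ Fintype.card A) (hn : 1 ≤ n)
    (hS : #S = Fintype.card A * n) (h : ∑ i ∈ S, w i = 0)
    (hw : ¬ HasZeroSumPartition w (n + 1) S) {i j : ι} (hi : i ∈ S) (hj : j ∈ S) : w i = w j := by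
  classical
  by_contra hij
  have hle : Fintype.card A ≤ #S := hS ▸ Nat.le_mul_of_pos_right _ hn
  have hpair : {i, j} ⊆ S := by grind
  obtain ⟨S', hpS', hS', hcard⟩ := exists_subsuperset_card_eq hpair
    (n := Fintype.card A - 1) (card_le_two.trans (by omega)) (by omega)
  obtain ⟨T, hT, hne, hsum⟩ := exists_zero_sum_subset_of_ne (S := S')
    (hpS' (mem_insert_self _ _)) (hpS' (by simp)) hij (by omega)
  have hTcard := card_le_card hT
  exact hw (hasZeroSumPartition_of_short hn hS h (hT.trans hS') hne hsum (by omega))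

theorem ne_zero_of_not_hasZeroSumPartition [Fintype A] {n : ℕ} (hA : 2 ≤ Fintype.card A)
    (hn : 1 ≤ n) (hS : #S = Fintype.card A * n) (h : ∑ i ∈ S, w i = 0)
    (hw : ¬ HasZeroSumPartition w (n + 1) S) {i : ι} (hi : i ∈ S) : w i ≠ 0 := fun h0 =>
  hw (hasZeroSumPartition_of_short (T := {i}) hn hS h (by simpa) (by simp) (by simpa)
    (by rw [card_singleton]; omega))

end GeneralizedDavenport

section RankTwo

variable {ι : Type*} {p : ℕ} [Fact p.Prime] {S : Finset ι}

-- Chevalley–Warning applied to the forms `∑ i, w i j * X i ^ (p - 1)`: the support of a nontrivial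
-- zero is the required subset.
theorem exists_zero_sum_subset_pi {k : ℕ} (w : ι → Fin k → ZMod p) (hS : k * (p - 1) < #S) :
    ∃ T ⊆ S, T.Nonempty ∧ ∑ i ∈ T, w i = 0 := by
  classical
  have hp := (Fact.out : p.Prime)
  let f : Fin k → MvPolynomial S (ZMod p) := fun j => ∑ i : S, w i j • X i ^ (p - 1)
  have hdeg : ∑ j, (f j).totalDegree < Fintype.card S := by
    calc ∑ j, (f j).totalDegree ≤ ∑ j : Fin k, (p - 1) :=
          sum_le_sum fun j _ => totalDegree_finsetSum_le fun i _ =>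
            (totalDegree_smul_le ..).trans (totalDegree_X_pow ..).le
      _ < _ := by simpa using hS
  have hdvd := char_dvd_card_solutions_of_sum_lt p hdeg
  let z : {x : S → ZMod p // ∀ j ∈ (univ : Finset (Fin k)), eval x (f j) = 0} :=
    ⟨0, fun j _ => by simp [f, map_sum, Nat.sub_ne_zero_of_lt hp.one_lt]⟩
  obtain ⟨x, hx⟩ := Fintype.exists_ne_of_one_lt_card
    (hp.one_lt.trans_le (Nat.le_of_dvd (Fintype.card_pos_iff.2 ⟨z⟩) (by convert hdvd))) z
  rw [← Subtype.coe_ne_coe, Function.ne_iff] at hx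
  refine ⟨({a : S | x.1 a ≠ 0} : Finset S).map ⟨(↑), Subtype.val_injective⟩, ?_, ?_, ?_⟩
  · simp +contextual [subset_iff]
  · exact (map_nonempty).2 (hx.imp fun a ha => mem_filter.2 ⟨mem_univ _, ha⟩)
  · ext j
    simpa [f, ZMod.pow_card_sub_one, sum_filter, smul_eval] using x.2 j (mem_univ _)

variable {w : ι → ZMod p × ZMod p}

theorem exists_zero_sum_subset_prod (hS : 2 * (p - 1) < #S) :
    ∃ T ⊆ S, T.Nonempty ∧ ∑ i ∈ T, w i = 0 := by
  obtain ⟨T, hT, hne, hsum⟩ := exists_zero_sum_subset_pi (fun i => ![(w i).1, (w i).2]) hS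
  refine ⟨T, hT, hne, Prod.ext ?_ ?_⟩
  · simpa [Prod.fst_sum] using congrFun hsum 0
  · simpa [Prod.snd_sum] using congrFun hsum 1

theorem exists_proper_zero_sum_subset_prod [DecidableEq ι] (hS : 2 * p ≤ #S) :
    ∃ T ⊆ S, T.Nonempty ∧ (S \ T).Nonempty ∧ ∑ i ∈ T, w i = 0 := by
  have hp := (Fact.out : p.Prime).two_le
  obtain ⟨S', hS', hcard⟩ := exists_subset_card_eq (s := S) (n := 2 * (p - 1) + 1) (by omega)
  obtain ⟨T, hT, hne, hsum⟩ := exists_zero_sum_subset_prod (w := w) (S := S') (by omega)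
  have hTcard := card_le_card hT
  refine ⟨T, hT.trans hS', hne, ?_, hsum⟩
  rw [← card_pos, card_sdiff_of_subset (hT.trans hS')]
  omega

-- A zero-sum subset whose length is divisible by `p` has length `p` or `2p`; in the second case it
-- splits further.
theorem exists_short_zero_sum_subset_prod (hS : 3 * (p - 1) < #S) :
    ∃ T ⊆ S, T.Nonempty ∧ #T ≤ p ∧ ∑ i ∈ T, w i = 0 := by
  classical
  obtain ⟨S', hS', hcard⟩ := exists_subset_card_eq (s := S) (n := 3 * (p - 1) + 1) (by omega)
  obtain ⟨T, hT, hne, hsum⟩ :=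
    exists_zero_sum_subset_pi (S := S') (fun i => ![(w i).1, (w i).2, 1]) (by omega)
  have hT0 : ∑ i ∈ T, w i = 0 := Prod.ext (by simpa [Prod.fst_sum] using congrFun hsum 0)
    (by simpa [Prod.snd_sum] using congrFun hsum 1)
  have hdvd : p ∣ #T := by
    rw [← ZMod.natCast_eq_zero_iff]
    simpa using congrFun hsum 2
  have hTcard := card_le_card hT
  have hp := (Fact.out : p.Prime).two_le
  by_cases hle : #T ≤ p
  · exact ⟨T, hT.trans hS', hne, hle, hT0⟩
  have htwo : #T = 2 * p := by
    obtain ⟨m, hm⟩ := hdvd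
    have hm3 : m < 3 := by
      by_contra! h3
      have := Nat.mul_le_mul_left p h3
      omega
    interval_cases m <;> omega
  obtain ⟨U, hU, hUne, hUne', hU0⟩ := exists_proper_zero_sum_subset_prod (w := w) htwo.ge
  have hUT := card_sdiff_add_card_eq_card hU
  rcases le_or_gt #U p with hle | hgt
  · exact ⟨U, (hU.trans hT).trans hS', hUne, hle, hU0⟩
  · exact ⟨T \ U, (sdiff_subset.trans hT).trans hS', hUne', by omega, sum_sdiff_eq_zero hU hU0 hT0⟩

theorem hasZeroSumPartition_prod {n : ℕ} (hS : p * n + p ≤ #S) (h : ∑ i ∈ S, w i = 0) :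
    HasZeroSumPartition w (n + 1) S := by
  classical
  have hp := (Fact.out : p.Prime).two_le
  induction n generalizing S with
  | zero => exact .one (card_pos.1 (by omega)) h
  | succ n ih =>
    rw [Nat.mul_succ] at hS
    rcases Nat.eq_zero_or_pos n with rfl | hn
    · obtain ⟨U, hU, hUne, hUne', hU0⟩ :=
        exists_proper_zero_sum_subset_prod (w := w) (S := S) (by omega)
      exact .cons hU hUne hU0 (.one hUne' (sum_sdiff_eq_zero hU hU0 h))
    · have := Nat.le_mul_of_pos_right p hn
      obtain ⟨T, hT, hne, hle, hT0⟩ :=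
        exists_short_zero_sum_subset_prod (w := w) (S := S) (by omega)
      refine .cons hT hne hT0 (ih ?_ (sum_sdiff_eq_zero hT hT0 h))
      rw [card_sdiff_of_subset hT]
      omega

theorem hasZeroSumPartition_klein_prod {A : Type*} [AddCommGroup A] [Fintype A]
    {s : ι → ZMod 2 × ZMod 2} {t : ι → A} {n : ℕ} (hS : 2 * (Fintype.card A * n) + 2 ≤ #S)
    (hs : ∑ i ∈ S, s i = 0) (ht : ∑ i ∈ S, t i = 0) :
    HasZeroSumPartition (fun i => (s i, t i)) (n + 1) S := by
  classical
  obtain ⟨c, hc⟩ := hasZeroSumPartition_prod hS hs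
  refine hc.comp (hasZeroSumPartition_of_card_mul_lt (by simp) ?_)
  rwa [sum_fiberwise]

end RankTwo

/-! ### Products of Pauli pairings -/

section PairSums

variable {ι A : Type*} [Fintype ι] [AddCommGroup A]

/-- The weights of the pairs `(k, 0), (k, 1)` formed out of a sequence indexed by `ι × Fin 2`. -/
def pairSum (ψ : ι × Fin 2 → A) (k : ι) : A := ψ (k, 0) + ψ (k, 1)

theorem sum_filter_pairSum {κ : Type*} [DecidableEq κ] (ψ : ι × Fin 2 → A) (c : ι → κ) (j : κ) :
    ∑ k with c k = j, pairSum ψ k = ∑ u with c u.1 = j, ψ u := by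
  simp only [sum_filter, Fintype.sum_prod_type, Fin.sum_univ_two, pairSum]
  exact sum_congr rfl fun k _ => by split_ifs <;> simp

theorem sum_pairSum (ψ : ι × Fin 2 → A) : ∑ k, pairSum ψ k = ∑ u, ψ u := by
  simp [Fintype.sum_prod_type, pairSum]

theorem sum_comp_swap {κ : Type*} [DecidableEq κ] (B : Finset κ) (f : κ → A) {a b : κ}
    (ha : a ∈ B) (hb : b ∉ B) : ∑ u ∈ B, f (Equiv.swap a b u) = ∑ u ∈ B, f u - f a + f b := by
  rw [← sum_erase_add B _ ha, ← sum_erase_add B f ha, Equiv.swap_apply_left, add_sub_cancel_right]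
  congr 1
  refine sum_congr rfl fun u hu => ?_
  rw [Equiv.swap_apply_of_ne_of_ne (ne_of_mem_erase hu) (by grind)]

variable {n : ℕ}

theorem hasZeroSumPartition_pairSum_of_eq_zero [Fintype A] (hn : 1 ≤ n)
    (hι : Fintype.card ι = 2 * (Fintype.card A * n) + 1) {ψ : ι × Fin 2 → A} (hψ : ∑ u, ψ u = 0)
    {s : ι → ZMod 2 × ZMod 2} (hs : ∑ k, s k = 0) {k : ι} (hk : s k = 0) :
    HasZeroSumPartition (fun k => (s k, pairSum ψ k)) (n + 1) univ := by
  classical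
  obtain ⟨m, hm⟩ := Nat.exists_eq_add_of_le' (Nat.mul_pos (Fintype.card_pos (α := A)) hn)
  obtain ⟨c, hc⟩ : HasZeroSumPartition s (m + 1 + 1) univ := by
    refine .cons (subset_univ {k}) (by simp) (by simpa) (hasZeroSumPartition_prod ?_ ?_)
    · rw [card_sdiff_of_subset (subset_univ _), card_univ, card_singleton]
      omega
    · exact sum_sdiff_eq_zero (subset_univ _) (by simpa) hs
  refine hc.comp (hasZeroSumPartition_of_card_mul_lt ?_ ?_)
  · rw [card_univ, Fintype.card_fin, hm]
    omega
  · rwa [sum_fiberwise, sum_pairSum]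

-- Swap two entries lying in different blocks: a third block keeps its sum, hence so do all blocks.
theorem eq_of_forall_perm_blockSum_eq {m : ℕ} {ψ : ι × Fin 2 → A} {c : ι → Fin m}
    (hm : 3 ≤ m) (hc : Function.Surjective c)
    (hψ : ∀ (σ : Equiv.Perm (ι × Fin 2)) (i j : Fin m),
      ∑ u with c u.1 = i, ψ (σ u) = ∑ u with c u.1 = j, ψ (σ u))
    (u w : ι × Fin 2) : ψ u = ψ w := by
  classical
  have exists_third (i j : Fin m) : ∃ l, l ≠ i ∧ l ≠ j := by
    obtain ⟨l, hl⟩ := exists_mem_notMem_of_card_lt_card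
      (s := {i, j}) (t := univ) (card_le_two.trans_lt (by rwa [card_univ, Fintype.card_fin]))
    exact ⟨l, by grind⟩
  have eq_of_ne {u w : ι × Fin 2} (huw : c u.1 ≠ c w.1) : ψ u = ψ w := by
    obtain ⟨l, hlu, hlw⟩ := exists_third (c u.1) (c w.1)
    have hfix : ∑ x with c x.1 = l, ψ (Equiv.swap u w x) = ∑ x with c x.1 = l, ψ x :=
      sum_congr rfl fun x hx => by rw [Equiv.swap_apply_of_ne_of_ne] <;> grind
    have hswap := hψ (Equiv.swap u w) (c u.1) l
    rw [sum_comp_swap _ ψ (by simp) (by simpa using huw.symm), hfix] at hswap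
    have hid := hψ 1 (c u.1) l
    simp only [Equiv.Perm.one_apply] at hid
    rw [hid, sub_add_eq_add_sub, sub_eq_iff_eq_add] at hswap
    exact (add_left_cancel hswap).symm
  by_cases huw : c u.1 = c w.1
  · obtain ⟨l, hlu, hlw⟩ := exists_third (c u.1) (c w.1)
    obtain ⟨k, rfl⟩ := hc l
    exact (eq_of_ne (w := (k, 0)) hlu.symm).trans (eq_of_ne hlw)
  · exact eq_of_ne huw

theorem exists_perm_hasZeroSumPartition [Fintype A] (hA : 3 ≤ Fintype.card A) (hn : 1 ≤ n)
    (hι : Fintype.card ι = 2 * (Fintype.card A * n) + 1) {ψ : ι × Fin 2 → A} (hψ : ∑ u, ψ u = 0)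
    {s : ι → ZMod 2 × ZMod 2} (hs : ∑ k, s k = 0) :
    ∃ σ : Equiv.Perm (ι × Fin 2),
      HasZeroSumPartition (fun k => (s k, pairSum (ψ ∘ σ) k)) (n + 1) univ := by
  by_contra! hno
  obtain ⟨m, hm⟩ := Nat.exists_eq_add_of_le' (Nat.mul_pos (Fintype.card_pos (α := A)) hn)
  obtain ⟨c, hc⟩ : HasZeroSumPartition s (m + 1) univ :=
    hasZeroSumPartition_prod (by rw [card_univ]; omega) hs
  have hcard : #(univ : Finset (Fin (m + 1))) = Fintype.card A * n := by simpa using hm.symm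
  have hblocks (σ : Equiv.Perm (ι × Fin 2)) : ¬ HasZeroSumPartition
      (fun j => ∑ k with c k = j, pairSum (ψ ∘ σ) k) (n + 1) univ := fun h => hno σ (hc.comp h)
  have htotal (σ : Equiv.Perm (ι × Fin 2)) :
      ∑ j, ∑ k with c k = j, pairSum (ψ ∘ σ) k = 0 := by
    rw [sum_fiberwise, sum_pairSum, ← hψ]
    exact Equiv.sum_comp σ ψ
  obtain ⟨τ, hτ⟩ : ∃ τ, ∀ u, ψ u = τ := by
    have hconst := eq_of_forall_perm_blockSum_eq (ψ := ψ) (c := c)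
      (by have := Nat.mul_le_mul hA hn; omega)
      (fun j => by simpa [Finset.Nonempty] using (hc j).1) fun σ i j => by
        have := eq_of_not_hasZeroSumPartition hA hn hcard (htotal σ) (hblocks σ)
          (mem_univ i) (mem_univ j)
        simpa only [sum_filter_pairSum, Function.comp] using this
    obtain ⟨k, -⟩ := (hc 0).1
    exact ⟨ψ (k, 0), fun u => hconst u _⟩
  have htwo : τ + τ = 0 := by
    have h4 : (4 * n) • Fintype.card A • τ + (τ + τ) = 0 := by
      simp only [hτ, sum_const, card_univ, Fintype.card_prod, hι, Fintype.card_fin] at hψ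
      rw [← two_nsmul, smul_smul, ← add_nsmul, ← hψ]
      congr 1
      ring
    simpa [card_nsmul_eq_zero] using h4
  refine ne_zero_of_not_hasZeroSumPartition (by omega) hn hcard (htotal 1) (hblocks 1)
    (mem_univ 0) (sum_eq_zero fun k _ => ?_)
  simpa [pairSum, hτ] using htwo

end PairSums

section PauliPairing

/-- The real Pauli basis of the `2 × 2` matrices: the matrix of the bilinear form on the
two-dimensional representation of the quaternion group on which `i` and `j` act by the signs
`(-1) ^ s.1` and `(-1) ^ s.2`. -/
def pauli (s : ZMod 2 × ZMod 2) : Matrix (Fin 2) (Fin 2) ℤ :=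
  if s = (1, 0) then !![1, 0; 0, 1] else if s = (1, 1) then !![1, 0; 0, -1]
  else if s = (0, 1) then !![0, 1; 1, 0] else !![0, 1; -1, 0]

theorem sum_pauli_mul_pauli (i j i' j' : Fin 2) :
    ∑ s, pauli s i j * pauli s i' j' = if i = i' ∧ j = j' then 2 else 0 := by
  revert i j i' j'
  decide

theorem pauli_transpose {s : ZMod 2 × ZMod 2} (hs : s ≠ 0) : (pauli s).transpose = pauli s := by
  revert s
  decide

variable {ι R : Type*} [CommRing R]

/-- The bilinear form with matrix `pauli s`. -/
def pauliPairing (s : ZMod 2 × ZMod 2) (a b : Fin 2 → R) : R :=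
  ∑ i, ∑ j, pauli s i j • (a i * b j)

theorem two_zsmul_mul_eq_sum_pauliPairing (a b : Fin 2 → R) (i j : Fin 2) :
    (2 : ℤ) • (a i * b j) = ∑ s, pauli s i j • pauliPairing s a b := by
  simp only [pauliPairing, smul_sum, smul_smul]
  rw [sum_comm]
  simp only [sum_comm (s := (univ : Finset (ZMod 2 × ZMod 2)))]
  simp only [← sum_smul, sum_pauli_mul_pauli]
  simp [ite_and]

variable [Fintype ι]

/-- The product of the Pauli pairings of the vectors `v (k, 0)` and `v (k, 1)`. -/
def pairingProd (v : ι × Fin 2 → Fin 2 → R) (s : ι → ZMod 2 × ZMod 2) : R :=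
  ∏ k, pauliPairing (s k) (v (k, 0)) (v (k, 1))

/-- The coefficient of the monomial `∏ u, v u (e u)` in `pairingProd v s`. -/
def pauliCoeff (s : ι → ZMod 2 × ZMod 2) (e : ι × Fin 2 → Fin 2) : ℤ :=
  ∏ k, pauli (s k) (e (k, 0)) (e (k, 1))

theorem two_pow_smul_prod_eq_sum_pairingProd [DecidableEq ι] (v : ι × Fin 2 → Fin 2 → R)
    (e : ι × Fin 2 → Fin 2) :
    (2 ^ Fintype.card ι : ℤ) • ∏ u, v u (e u) = ∑ s, pauliCoeff s e • pairingProd v s := by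
  calc (2 ^ Fintype.card ι : ℤ) • ∏ u, v u (e u)
      = ∏ k, (2 : ℤ) • (v (k, 0) (e (k, 0)) * v (k, 1) (e (k, 1))) := by
        rw [← smul_prod, Fintype.prod_prod_type]
        simp [card_univ]
    _ = ∑ s, pauliCoeff s e • pairingProd v s := by
        simp only [two_zsmul_mul_eq_sum_pauliPairing, prod_univ_sum, Fintype.piFinset_univ]
        exact sum_congr rfl fun s _ => prod_smul _ _ _

theorem pairingProd_eq_sum [DecidableEq ι] (v : ι × Fin 2 → Fin 2 → R)
    (s : ι → ZMod 2 × ZMod 2) : pairingProd v s = ∑ e, pauliCoeff s e • ∏ u, v u (e u) := by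
  have hpairing (k : ι) : pauliPairing (s k) (v (k, 0)) (v (k, 1)) =
      ∑ p : Fin 2 → Fin 2, pauli (s k) (p 0) (p 1) • ∏ l, v (k, l) (p l) := by
    rw [← (finTwoArrowEquiv (Fin 2)).symm.sum_comp, Fintype.sum_prod_type]
    simp [pauliPairing]
  simp only [pairingProd, hpairing, prod_univ_sum, Fintype.piFinset_univ]
  refine Fintype.sum_equiv (Equiv.curry ι (Fin 2) (Fin 2)).symm _ _ fun p => ?_
  rw [prod_smul, Fintype.prod_prod_type]
  rfl

end PauliPairing

section Exchange

variable {ι K R : Type*} [Fintype ι] [Field K] [CommRing R] [Algebra K R]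
  {J : Submodule K R}

theorem mem_of_two_pow_smul_mem (h2 : (2 : K) ≠ 0) (m : ℕ) {x : R}
    (hx : (2 ^ m : ℤ) • x ∈ J) : x ∈ J := by
  rw [← Int.cast_smul_eq_zsmul K] at hx
  exact (J.smul_mem_iff (by push_cast; exact pow_ne_zero m h2)).1 hx

theorem prod_mem_of_forall_pairingProd_mem (h2 : (2 : K) ≠ 0) {v : ι × Fin 2 → Fin 2 → R}
    (hv : ∀ s, pairingProd v s ∈ J) (e : ι × Fin 2 → Fin 2) : ∏ u, v u (e u) ∈ J := by
  classical
  refine mem_of_two_pow_smul_mem h2 (Fintype.card ι) ?_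
  rw [two_pow_smul_prod_eq_sum_pairingProd]
  exact sum_mem fun s _ => zsmul_mem (hv s) _

section Swap

variable [DecidableEq ι]

theorem pauliCoeff_comp_swap {s : ι → ZMod 2 × ZMod 2} {k : ι} (hk : s k ≠ 0)
    (e : ι × Fin 2 → Fin 2) : pauliCoeff s (e ∘ Equiv.swap (k, 0) (k, 1)) = pauliCoeff s e := by
  refine prod_congr rfl fun l _ => ?_
  by_cases hl : l = k
  · subst hl
    simpa using congrFun₂ (pauli_transpose hk) (e (l, 0)) (e (l, 1))
  · rw [Function.comp, Function.comp, Equiv.swap_apply_of_ne_of_ne (by simp [hl]) (by simp [hl]),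
      Equiv.swap_apply_of_ne_of_ne (by simp [hl]) (by simp [hl])]

-- Only the alternating form `pauli 0` distinguishes a monomial from its image under the swap.
theorem prod_sub_prod_comp_swap_mem (h2 : (2 : K) ≠ 0) {v : ι × Fin 2 → Fin 2 → R} {k : ι}
    (hv : ∀ s, s k = 0 → pairingProd v s ∈ J) (e : ι × Fin 2 → Fin 2) :
    ∏ u, v u (e u) - ∏ u, v u (e (Equiv.swap (k, 0) (k, 1) u)) ∈ J := by
  refine mem_of_two_pow_smul_mem h2 (Fintype.card ι) ?_
  have hswap : (2 ^ Fintype.card ι : ℤ) • ∏ u, v u (e (Equiv.swap (k, 0) (k, 1) u)) =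
      ∑ s, pauliCoeff s (e ∘ Equiv.swap (k, 0) (k, 1)) • pairingProd v s :=
    two_pow_smul_prod_eq_sum_pairingProd v (e ∘ Equiv.swap (k, 0) (k, 1))
  rw [smul_sub, two_pow_smul_prod_eq_sum_pairingProd, hswap, ← sum_sub_distrib]
  refine sum_mem fun s _ => ?_
  by_cases hk : s k = 0
  · exact sub_mem (zsmul_mem (hv s hk) _) (zsmul_mem (hv s hk) _)
  · simp [pauliCoeff_comp_swap hk]

end Swap

theorem prod_sub_prod_comp_perm_mem (h2 : (2 : K) ≠ 0) {v : ι × Fin 2 → Fin 2 → R}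
    (hv : ∀ (σ : Equiv.Perm (ι × Fin 2)) (s : ι → ZMod 2 × ZMod 2) (k : ι), s k = 0 →
      pairingProd (v ∘ σ) s ∈ J)
    (π : Equiv.Perm (ι × Fin 2)) (e : ι × Fin 2 → Fin 2) :
    ∏ u, v u (e u) - ∏ u, v u (e (π u)) ∈ J := by
  classical
  induction π using Equiv.Perm.swap_induction_on generalizing e with
  | one => simp
  | swap_mul π a b hab ih =>
    obtain ⟨k, σ, rfl, rfl⟩ :
        ∃ k, ∃ σ : Equiv.Perm (ι × Fin 2), σ (k, 0) = a ∧ σ (k, 1) = b :=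
      ⟨a.1, MulAction.is_two_pretransitive_iff.1
        (Equiv.Perm.isMultiplyPretransitive (ι × Fin 2) 2) (by simp) hab⟩
    have hswap := prod_sub_prod_comp_swap_mem h2 (fun s => hv σ s k) (e ∘ σ)
    have hconj (u) : σ (Equiv.swap (k, 0) (k, 1) u) = Equiv.swap (σ (k, 0)) (σ (k, 1)) (σ u) := by
      simp [Equiv.swap_apply_apply]
    simp only [Function.comp, hconj] at hswap
    rw [Equiv.prod_comp σ fun u => v u (e u),
      Equiv.prod_comp σ fun u => v u (e (Equiv.swap (σ (k, 0)) (σ (k, 1)) u))] at hswap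
    simpa using add_mem hswap (ih (e ∘ Equiv.swap (σ (k, 0)) (σ (k, 1))))

theorem pairingProd_comp_perm_sub_mem (h2 : (2 : K) ≠ 0) {v : ι × Fin 2 → Fin 2 → R}
    (hv : ∀ (σ : Equiv.Perm (ι × Fin 2)) (s : ι → ZMod 2 × ZMod 2) (k : ι), s k = 0 →
      pairingProd (v ∘ σ) s ∈ J)
    (σ : Equiv.Perm (ι × Fin 2)) (s : ι → ZMod 2 × ZMod 2) :
    pairingProd v s - pairingProd (v ∘ σ) s ∈ J := by
  classical
  rw [pairingProd_eq_sum, pairingProd_eq_sum, ← sum_sub_distrib]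
  refine sum_mem fun e _ => ?_
  rw [← smul_sub]
  refine zsmul_mem ?_ _
  have := prod_sub_prod_comp_perm_mem h2 hv σ⁻¹ e
  rw [← Equiv.prod_comp σ fun u => v u (e (σ⁻¹ u))] at this
  simpa using this

theorem prod_mem_of_pairingProd_mem {A : Type*} [AddCommGroup A] [Fintype A] {n : ℕ}
    (h2 : (2 : K) ≠ 0) (hA : 3 ≤ Fintype.card A) (hn : 1 ≤ n)
    (hι : Fintype.card ι = 2 * (Fintype.card A * n) + 1) {ψ : ι × Fin 2 → A} (hψ : ∑ u, ψ u = 0)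
    {v : ι × Fin 2 → Fin 2 → R}
    (hv : ∀ (σ : Equiv.Perm (ι × Fin 2)) (s : ι → ZMod 2 × ZMod 2),
      (∑ k, s k = 0 → HasZeroSumPartition (fun k => (s k, pairSum (ψ ∘ σ) k)) (n + 1) univ) →
        pairingProd (v ∘ σ) s ∈ J)
    (e : ι × Fin 2 → Fin 2) : ∏ u, v u (e u) ∈ J := by
  have hzero (σ : Equiv.Perm (ι × Fin 2)) (s : ι → ZMod 2 × ZMod 2) (k : ι) (hk : s k = 0) :
      pairingProd (v ∘ σ) s ∈ J :=
    hv σ s fun hs => hasZeroSumPartition_pairSum_of_eq_zero hn hι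
      ((Equiv.sum_comp σ ψ).trans hψ) hs hk
  refine prod_mem_of_forall_pairingProd_mem h2 (fun s => ?_) e
  by_cases hs : ∑ k, s k = 0
  · obtain ⟨σ, hσ⟩ := exists_perm_hasZeroSumPartition hA hn hι hψ hs
    simpa using add_mem (pairingProd_comp_perm_sub_mem h2 hzero σ s) (hv σ s fun _ => hσ)
  · exact hv 1 s fun h => absurd h hs

end Exchange

/-! ### The Reynolds operator and the Hilbert ideal -/

section Invariants

variable {K R G : Type*} [Field K] [CommRing R] [Algebra K R] [Group G] (A : G →* (R →ₐ[K] R))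

/-- The algebra of invariants of a group acting on an algebra by automorphisms. -/
def invariants : Subalgebra K R := ⨅ g, AlgHom.equalizer (A g) (AlgHom.id K R)

variable {A} in
theorem mem_invariants {u : R} : u ∈ invariants A ↔ ∀ g, A g u = u := by
  simp [invariants, Algebra.mem_iInf]

theorem mem_invariants_of_closure_eq_top {S : Set G} (hS : Subgroup.closure S = ⊤) {u : R}
    (h : ∀ g ∈ S, A g u = u) : u ∈ invariants A := by
  refine mem_invariants.2 fun g => ?_
  induction hS.ge (Subgroup.mem_top g) using Subgroup.closure_induction with
  | mem x hx => exact h x hx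
  | one => simp
  | mul x y _ _ hx hy => rw [map_mul, AlgHom.mul_apply, hy, hx]
  | inv x _ hx =>
    conv_lhs => rw [← hx]
    rw [← AlgHom.mul_apply, ← map_mul]
    simp

/-- The ideal generated by the invariants lying in the ideal `M`; for the augmentation ideal `M` of
a polynomial ring this is the Hilbert ideal. -/
def hilbertIdeal (M : Ideal R) : Ideal R := Ideal.span {u | u ∈ invariants A ∧ u ∈ M}

variable [Fintype G]

/-- The Reynolds operator: averaging over the group. -/
def reynolds : R →ₗ[K] R := (Fintype.card G : K)⁻¹ • ∑ g, (A g).toLinearMap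

theorem reynolds_apply (f : R) : reynolds A f = (Fintype.card G : K)⁻¹ • ∑ g, A g f := by
  simp [reynolds]

theorem reynolds_mem_invariants (f : R) : reynolds A f ∈ invariants A := by
  refine mem_invariants.2 fun g => ?_
  rw [reynolds_apply, map_smul, map_sum, ← Equiv.sum_comp (Equiv.mulLeft g) fun h => A h f]
  simp

theorem reynolds_act (f : R) (g : G) : reynolds A (A g f) = reynolds A f := by
  rw [reynolds_apply, reynolds_apply, ← Equiv.sum_comp (Equiv.mulRight g) fun h => A h f]
  simp

variable {A}

theorem reynolds_mul {u : R} (hu : u ∈ invariants A) (f : R) :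
    reynolds A (u * f) = u * reynolds A f := by
  simp only [reynolds_apply, mul_smul_comm, mul_sum, map_mul, mem_invariants.1 hu]

theorem reynolds_of_mem (hK : (Fintype.card G : K) ≠ 0) {u : R} (hu : u ∈ invariants A) :
    reynolds A u = u := by
  simp only [reynolds_apply, mem_invariants.1 hu, sum_const, card_univ]
  rw [← Nat.cast_smul_eq_nsmul K, inv_smul_smul₀ hK]

theorem map_reynolds {L S : Type*} [Field L] [Algebra K L] [CommRing S] [Algebra K S] [Algebra L S]
    [IsScalarTower K L S] {B : G →* (S →ₐ[L] S)} (π : R →ₐ[K] S)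
    (h : ∀ g f, π (A g f) = B g (π f)) (f : R) : π (reynolds A f) = reynolds B (π f) := by
  rw [reynolds_apply, reynolds_apply, map_smul, map_sum, ← algebraMap_smul L, map_inv₀, map_natCast]
  simp only [h]

theorem reynolds_eq_zero_of_act_eq_smul {g : G} {c : K} (hc : c ≠ 1) {u : R}
    (hu : A g u = c • u) : reynolds A u = 0 := by
  have hzero : (c - 1) • reynolds A u = 0 := by
    rw [sub_smul, ← map_smul, ← hu, reynolds_act, one_smul, sub_self]
  exact (smul_eq_zero.1 hzero).resolve_left (sub_ne_zero.2 hc)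

variable (A) in
/-- The elements whose image under the Reynolds operator lies in the `n`-th power of the ideal
`hilbertIdeal A M`. -/
def reynoldsComap (M : Ideal R) (n : ℕ) : Submodule K R :=
  ((hilbertIdeal A M ^ n).restrictScalars K).comap (reynolds A)

end Invariants

section Benson

variable {K R G : Type*} [Field K] [CommRing R] [Algebra K R] [Group G] {A : G →* (R →ₐ[K] R)}
  {M : Ideal R}

theorem prod_sub_act_eq_zero {H : Subgroup G} [Fintype (G ⧸ H)] {u : G ⧸ H → R}
    (hu : ∀ c, u c ∈ invariants (A.comp H.subtype)) (g : G) :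
    ∏ c : G ⧸ H, (u c - A (g * c.out) (u c)) = 0 := by
  refine prod_eq_zero (mem_univ ((g⁻¹ : G) : G ⧸ H)) ?_
  have hmem : g * ((g⁻¹ : G) : G ⧸ H).out ∈ H := by
    have := QuotientGroup.eq.1 (Quotient.out_eq ((g⁻¹ : G) : G ⧸ H)).symm
    simpa using this
  exact sub_eq_zero.2 (mem_invariants.1 (hu _) ⟨_, hmem⟩).symm

-- Average the vanishing products `∏ c, (u c - g (c.out (u c)))` over `g` and expand: apart from
-- `∏ c, u c`, every term has a factor which is an invariant of `G`.
theorem hilbertIdeal_comp_subtype_pow_index_le [Fintype G] (hK : (Fintype.card G : K) ≠ 0)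
    (hM : ∀ g, ∀ u ∈ M, A g u ∈ M) (H : Subgroup G) :
    hilbertIdeal (A.comp H.subtype) M ^ H.index ≤ hilbertIdeal A M := by
  classical
  have : Fintype (G ⧸ H) := .ofFinite _
  have hindex : H.index = #(univ : Finset (G ⧸ H)) := by
    rw [card_univ, Subgroup.index, Nat.card_eq_fintype_card]
  rw [hindex, ← prod_const, hilbertIdeal, Ideal.prod_span, Ideal.span_le]
  intro a ha
  obtain ⟨u, hu, rfl⟩ := (Set.mem_finsetProd _ _ _).1 ha
  let t (T : Finset (G ⧸ H)) : R := ∏ c ∈ T, A c.out (u c)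
  have hexpand (g : G) : ∑ T, ((-1) ^ #T * ∏ c ∈ univ \ T, u c) * A g (t T) = 0 := by
    rw [← prod_sub_act_eq_zero (fun c => (hu (mem_univ c)).1) g, prod_sub, powerset_univ]
    simp [t, map_prod]
  have hreynolds : ∑ T, ((-1) ^ #T * ∏ c ∈ univ \ T, u c) * reynolds A (t T) = 0 := by
    simp only [reynolds_apply, mul_smul_comm, mul_sum, ← smul_sum]
    rw [sum_comm, sum_congr rfl fun g _ => hexpand g, sum_const_zero, smul_zero]
  have hmem {T : Finset (G ⧸ H)} (hT : T ≠ ∅) : reynolds A (t T) ∈ hilbertIdeal A M := by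
    obtain ⟨c, hc⟩ := nonempty_iff_ne_empty.2 hT
    refine Ideal.subset_span ⟨reynolds_mem_invariants A _, ?_⟩
    have htM : t T ∈ M := Ideal.mem_of_dvd M (dvd_prod_of_mem _ hc) (hM _ _ (hu (mem_univ c)).2)
    rw [reynolds_apply]
    exact Submodule.smul_of_tower_mem _ _ (sum_mem fun g _ => hM g _ htM)
  rw [← add_sum_erase _ _ (mem_univ ∅), add_eq_zero_iff_eq_neg] at hreynolds
  have hone : reynolds A (t ∅) = 1 := by
    rw [show t ∅ = 1 from prod_empty, reynolds_of_mem hK (one_mem _)]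
  simp only [hone, card_empty, pow_zero, sdiff_empty, one_mul, mul_one] at hreynolds
  rw [SetLike.mem_coe, hreynolds]
  exact neg_mem (sum_mem fun T hT => Ideal.mul_mem_left _ _ (hmem (ne_of_mem_erase hT)))

end Benson

section Weights

variable {K : Type*} [Field K]

theorem sum_addChar_neg_pow {r : ℕ} [NeZero r] {χ : AddChar (ZMod r) K} (hχ : χ.IsPrimitive) {k : ℕ}
    (hk : k < r) : ∑ a, χ (-a) ^ k = if k = 0 then (r : K) else 0 := by
  have hk0 : (-k : ZMod r) = 0 ↔ k = 0 := by
    rw [neg_eq_zero, ZMod.natCast_eq_zero_iff]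
    exact ⟨fun h => Nat.eq_zero_of_dvd_of_lt h hk, by rintro rfl; simp⟩
  have hsum := AddChar.sum_mulShift (-k : ZMod r) hχ
  simp only [hk0, ZMod.card, Nat.cast_ite, Nat.cast_zero] at hsum
  rw [← hsum]
  refine sum_congr rfl fun a _ => ?_
  rw [← AddChar.map_nsmul_eq_pow, nsmul_eq_mul, mul_neg, mul_neg, mul_comm]

theorem natCast_ne_zero_of_isPrimitive {r : ℕ} [NeZero r] {χ : AddChar (ZMod r) K}
    (hχ : χ.IsPrimitive) : (r : K) ≠ 0 := by
  have hroot : IsPrimitiveRoot (χ 1) r := by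
    refine ⟨by rw [← AddChar.map_nsmul_eq_pow]; simp, fun l hl => ?_⟩
    rwa [← AddChar.map_nsmul_eq_pow, nsmul_one, AddChar.IsPrimitive.zmod_char_eq_one_iff r hχ,
      ZMod.natCast_eq_zero_iff] at hl
  exact hroot.neZero'.out

-- The projection to the eigenspace of `ζ` is `r⁻¹ • ∑ k < r, (ζ⁻¹ • T) ^ k`.
theorem le_iSup_inf_eigenspace {V : Type*} [AddCommGroup V] [Module K V] {r : ℕ} [NeZero r]
    {χ : AddChar (ZMod r) K} (hχ : χ.IsPrimitive) {T : Module.End K V}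
    {W : Submodule K V} (hW : ∀ v ∈ W, T v ∈ W) (hT : ∀ v ∈ W, (T ^ r) v = v) :
    W ≤ ⨆ a, W ⊓ T.eigenspace (χ a) := by
  classical
  intro v hv
  let P (a : ZMod r) : Module.End K V := ∑ k ∈ range r, (χ (-a) • T) ^ k
  have hpow (k : ℕ) : (T ^ k) v ∈ W := by
    induction k with
    | zero => exact hv
    | succ k ih => rw [pow_succ', Module.End.mul_apply]; exact hW _ ih
  have hmem (a : ZMod r) : P a v ∈ W := by
    simpa [P, smul_pow] using sum_mem fun k _ => W.smul_mem _ (hpow k)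
  have heigen (a : ZMod r) : T (P a v) = χ a • P a v := by
    have hgeom := congrArg (fun S : Module.End K V => S v) (mul_geom_sum (χ (-a) • T) r)
    have hχr : χ (-a) ^ r = 1 := by rw [← AddChar.map_nsmul_eq_pow]; simp
    simp only [smul_pow, hχr, one_smul, LinearMap.sub_apply, hT v hv, Module.End.one_apply,
      sub_self, sub_mul, one_mul, Module.End.mul_apply, sub_eq_zero, LinearMap.smul_apply] at hgeom
    have := congrArg (χ a • ·) hgeom
    simpa [smul_smul, ← AddChar.map_add_eq_mul, P, smul_pow] using this
  have hsum : ∑ a, P a v = (r : K) • v := by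
    simp only [P, LinearMap.sum_apply, smul_pow, LinearMap.smul_apply]
    rw [sum_comm]
    simp only [← sum_smul]
    rw [sum_congr rfl fun k hk => by rw [sum_addChar_neg_pow hχ (mem_range.1 hk)]]
    simp [NeZero.pos r]
  rw [← inv_smul_smul₀ (natCast_ne_zero_of_isPrimitive hχ) v, ← hsum]
  exact Submodule.smul_mem _ _ (sum_mem fun a _ => Submodule.mem_iSup_of_mem a
    ⟨hmem a, Module.End.mem_eigenspace_iff.2 (heigen a)⟩)

variable {R G : Type*} [CommRing R] [Algebra K R] [Group G] (A : G →* (R →ₐ[K] R))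
  {κ B : Type*} [AddCommGroup B]

/-- The simultaneous eigenspace of the elements `g k` with eigenvalues `χ k w`. -/
def weightSpace (g : κ → G) (χ : κ → AddChar B K) (w : B) : Submodule K R :=
  ⨅ k, Module.End.eigenspace (A (g k)).toLinearMap (χ k w)

variable {A} {g : κ → G} {χ : κ → AddChar B K}

theorem mem_weightSpace {w : B} {u : R} :
    u ∈ weightSpace A g χ w ↔ ∀ k, A (g k) u = χ k w • u := by
  simp [weightSpace]

instance : SetLike.GradedMonoid (weightSpace A g χ) where
  one_mem := by simp [mem_weightSpace]
  mul_mem a b u v hu hv := mem_weightSpace.2 fun k => by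
    rw [map_mul, mem_weightSpace.1 hu, mem_weightSpace.1 hv, smul_mul_smul_comm,
      AddChar.map_add_eq_mul]

theorem weightSpace_zero_le_invariants (hg : Subgroup.closure (Set.range g) = ⊤) :
    weightSpace A g χ 0 ≤ (invariants A).toSubmodule := fun u hu =>
  mem_invariants_of_closure_eq_top A hg <| by
    rintro _ ⟨k, rfl⟩
    simpa using mem_weightSpace.1 hu k

theorem prod_mem_reynoldsComap [Fintype G] (hK : (Fintype.card G : K) ≠ 0)
    (hg : Subgroup.closure (Set.range g) = ⊤) (hχ : ∀ w, (∀ k, χ k w = 1) → w = 0) {M : Ideal R}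
    {ι : Type*} [Fintype ι] {n : ℕ} {w : ι → B} {u : ι → R}
    (hu : ∀ i, u i ∈ weightSpace A g χ (w i)) (huM : ∀ i, u i ∈ M)
    (hw : ∑ i, w i = 0 → HasZeroSumPartition w n univ) :
    ∏ i, u i ∈ reynoldsComap A M n := by
  change reynolds A (∏ i, u i) ∈ hilbertIdeal A M ^ n
  have hprod (S : Finset ι) : ∏ i ∈ S, u i ∈ weightSpace A g χ (∑ i ∈ S, w i) :=
    SetLike.prod_mem_graded _ _ _ fun i _ => hu i
  have hinv {S : Finset ι} (hS : ∑ i ∈ S, w i = 0) : ∏ i ∈ S, u i ∈ invariants A :=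
    weightSpace_zero_le_invariants hg (hS ▸ hprod S)
  by_cases h0 : ∑ i, w i = 0
  · obtain ⟨c, hc⟩ := hw h0
    rw [reynolds_of_mem hK (hinv h0), ← prod_fiberwise univ c]
    have hblock (k : Fin n) : ∏ i with c i = k, u i ∈ hilbertIdeal A M := by
      obtain ⟨i, hi⟩ := (hc k).1
      exact Ideal.subset_span
        ⟨hinv (hc k).2, Ideal.mem_of_dvd M (dvd_prod_of_mem _ hi) (huM i)⟩
    simpa using Ideal.prod_mem_prod (s := univ) fun k _ => hblock k
  · obtain ⟨k, hk⟩ := not_forall.1 (mt (hχ (∑ i, w i)) h0)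
    rw [reynolds_eq_zero_of_act_eq_smul hk (mem_weightSpace.1 (hprod univ) k)]
    exact zero_mem _

end Weights

/-! ### Generators of rings of polynomial invariants -/

section Homogeneous

variable {σ K : Type*} [Field K]

theorem homogeneousComponent_mul (k : ℕ) (u b : MvPolynomial σ K) :
    homogeneousComponent k (u * b) =
      ∑ p ∈ antidiagonal k, homogeneousComponent p.1 u * homogeneousComponent p.2 b := by
  classical
  ext d
  simp only [coeff_sum, coeff_mul, coeff_homogeneousComponent]
  have hite (x : (σ →₀ ℕ) × (σ →₀ ℕ)) (p : ℕ × ℕ) :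
      ((if x.1.degree = p.1 then coeff x.1 u else 0) *
        if x.2.degree = p.2 then coeff x.2 b else 0) =
      if (x.1.degree, x.2.degree) = p then coeff x.1 u * coeff x.2 b else 0 := by
    rw [ite_zero_mul_ite_zero]
    simp only [Prod.ext_iff]
  simp only [hite]
  rw [sum_comm]
  simp only [sum_ite_eq, HasAntidiagonal.mem_antidiagonal]
  split_ifs with hd
  · refine sum_congr rfl fun x hx => ?_
    rw [← map_add, HasAntidiagonal.mem_antidiagonal.1 hx, if_pos hd]
  · refine (sum_eq_zero fun x hx => ?_).symm
    rw [← map_add, HasAntidiagonal.mem_antidiagonal.1 hx, if_neg hd]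

/-- The ideal of the polynomials without constant term. -/
noncomputable def augIdeal (σ K : Type*) [Field K] : Ideal (MvPolynomial σ K) :=
  RingHom.ker constantCoeff

theorem mem_augIdeal {f : MvPolynomial σ K} : f ∈ augIdeal σ K ↔ constantCoeff f = 0 := Iff.rfl

theorem mem_augIdeal_of_isHomogeneous {f : MvPolynomial σ K} {n : ℕ} (hn : n ≠ 0)
    (hf : f.IsHomogeneous n) : f ∈ augIdeal σ K := by
  rw [mem_augIdeal, constantCoeff_eq]
  exact hf.coeff_eq_zero (by simpa using hn.symm)

theorem mem_of_isHomogeneous_of_prod_mem {J : Submodule K (MvPolynomial σ K)}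
    {E : Set (MvPolynomial σ K)} (hE : homogeneousSubmodule σ K 1 ≤ Submodule.span K E) {D : ℕ}
    (hJ : ∀ e : Fin D → MvPolynomial σ K, (∀ i, e i ∈ E) → ∏ i, e i ∈ J)
    {f : MvPolynomial σ K} (hf : f.IsHomogeneous D) : f ∈ J := by
  have hmem : f ∈ homogeneousSubmodule σ K 1 ^ D := by
    rwa [homogeneousSubmodule_one_pow, mem_homogeneousSubmodule]
  have hspan := pow_le_pow_left' hE D hmem
  rw [Submodule.span_pow] at hspan
  refine Submodule.span_le.2 (fun a ha => ?_) hspan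
  obtain ⟨e, rfl⟩ := Set.mem_pow.1 ha
  rw [List.prod_ofFn]
  exact hJ (fun i => e i) fun i => (e i).2

theorem span_mul_induction {R : Type*} [CommRing R] {U : Set R} {M : Ideal R} {p : R → Prop}
    (mul : ∀ u ∈ U, ∀ b ∈ M, p (u * b)) (zero : p 0) (add : ∀ x y, p x → p y → p (x + y)) {x : R}
    (hx : x ∈ Ideal.span U * M) : p x := by
  refine Submodule.mul_induction_on hx (fun a ha => ?_) add
  induction ha using Submodule.span_induction with
  | mem u hu => exact mul u hu
  | zero => simpa using fun _ _ => zero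
  | add a b _ _ iha ihb =>
    intro c hc
    rw [add_mul]
    exact add _ _ (iha c hc) (ihb c hc)
  | smul r a _ iha =>
    intro c hc
    rw [smul_mul_assoc, ← mul_smul_comm]
    exact iha _ (M.smul_mem r hc)

end Homogeneous

section LinearAction

variable {σ K G : Type*} [Field K] [Group G] {A : G →* (MvPolynomial σ K →ₐ[K] MvPolynomial σ K)}

/-- The action of a group on a polynomial ring is by linear substitutions of the variables. -/
def IsLinearAction (A : G →* (MvPolynomial σ K →ₐ[K] MvPolynomial σ K)) : Prop :=
  ∀ g i, (A g (X i)).IsHomogeneous 1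

namespace IsLinearAction

theorem comp (hA : IsLinearAction A) {H : Type*} [Group H] (φ : H →* G) :
    IsLinearAction (A.comp φ) := fun h => hA (φ h)

theorem map_isHomogeneous (hA : IsLinearAction A) (g : G) {f : MvPolynomial σ K} {n : ℕ}
    (hf : f.IsHomogeneous n) : (A g f).IsHomogeneous n := by
  rw [show A g = aeval fun i => A g (X i) from algHom_ext fun i => by simp]
  simpa using hf.aeval _ (hA g)

theorem map_homogeneousComponent (hA : IsLinearAction A) (g : G) (n : ℕ) (f : MvPolynomial σ K) :
    A g (homogeneousComponent n f) = homogeneousComponent n (A g f) := by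
  conv_rhs => rw [← sum_homogeneousComponent f, map_sum, map_sum]
  rw [sum_congr rfl fun i _ => homogeneousComponent_of_mem (m := n)
    (hA.map_isHomogeneous g (homogeneousComponent_isHomogeneous i f)), sum_ite_eq]
  split_ifs with h
  · rfl
  · rw [homogeneousComponent_eq_zero _ _ (by simpa using h), map_zero]

theorem map_mem_augIdeal (hA : IsLinearAction A) (g : G) {f : MvPolynomial σ K}
    (hf : f ∈ augIdeal σ K) : A g f ∈ augIdeal σ K := by
  have hzero : homogeneousComponent 0 (A g f) = 0 := by
    rw [← hA.map_homogeneousComponent, homogeneousComponent_zero, ← constantCoeff_eq,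
      mem_augIdeal.1 hf, map_zero, map_zero]
  rw [homogeneousComponent_zero, map_eq_zero_iff C (C_injective σ K)] at hzero
  exact hzero

theorem reynolds_isHomogeneous [Fintype G] (hA : IsLinearAction A) {f : MvPolynomial σ K} {n : ℕ}
    (hf : f.IsHomogeneous n) : (reynolds A f).IsHomogeneous n := by
  rw [reynolds_apply]
  exact (homogeneousSubmodule σ K n).smul_mem _ (sum_mem fun g _ => hA.map_isHomogeneous g hf)

end IsLinearAction

variable (A) in
/-- The subalgebra generated by the invariants of degree at most `s`. -/
noncomputable def adjoinInvariantsLe (s : ℕ) : Subalgebra K (MvPolynomial σ K) :=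
  Algebra.adjoin K {u | u ∈ invariants A ∧ u.totalDegree ≤ s}

variable [Fintype G] {s : ℕ}

theorem reynolds_homogeneousComponent_mul_mem (hA : IsLinearAction A)
    {S : Subalgebra K (MvPolynomial σ K)} {k : ℕ}
    (hS : ∀ i < k, ∀ f ∈ invariants A, f.IsHomogeneous i → f ∈ S) {u b : MvPolynomial σ K}
    (hu : u ∈ invariants A) (hu0 : u ∈ augIdeal σ K) (hb : b ∈ augIdeal σ K) :
    reynolds A (homogeneousComponent k (u * b)) ∈ S := by
  have component_zero {f : MvPolynomial σ K} (hf : f ∈ augIdeal σ K) :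
      homogeneousComponent 0 f = 0 := by
    rw [homogeneousComponent_zero, ← constantCoeff_eq, mem_augIdeal.1 hf, map_zero]
  rw [homogeneousComponent_mul, map_sum]
  refine sum_mem fun ⟨i, j⟩ hij => ?_
  have hij : i + j = k := HasAntidiagonal.mem_antidiagonal.1 hij
  have hinv : homogeneousComponent i u ∈ invariants A := mem_invariants.2 fun g => by
    rw [hA.map_homogeneousComponent, mem_invariants.1 hu]
  rw [reynolds_mul hinv]
  by_cases hi : i = 0
  · simp [hi, component_zero hu0]
  by_cases hj : j = 0
  · simp [hj, component_zero hb]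
  exact mul_mem (hS i (by omega) _ hinv (homogeneousComponent_isHomogeneous i u))
    (hS j (by omega) _ (reynolds_mem_invariants A _)
      (hA.reynolds_isHomogeneous (homogeneousComponent_isHomogeneous j b)))

theorem invariants_le_adjoinInvariantsLe (hA : IsLinearAction A) (hK : (Fintype.card G : K) ≠ 0)
    (hs : ∀ k > s, ∀ f ∈ invariants A, f.IsHomogeneous k →
      f ∈ hilbertIdeal A (augIdeal σ K) * augIdeal σ K) :
    invariants A ≤ adjoinInvariantsLe A s := by
  have homogeneous_mem (k : ℕ) : ∀ f ∈ invariants A, f.IsHomogeneous k →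
      f ∈ adjoinInvariantsLe A s := by
    induction k using Nat.strong_induction_on with
    | _ k ih =>
    intro f hf hfk
    by_cases hk : k ≤ s
    · exact Algebra.subset_adjoin ⟨hf, hfk.totalDegree_le.trans hk⟩
    have hmem : reynolds A (homogeneousComponent k f) ∈ adjoinInvariantsLe A s :=
      span_mul_induction
        (p := fun x => reynolds A (homogeneousComponent k x) ∈ adjoinInvariantsLe A s)
        (fun u hu b hb => reynolds_homogeneousComponent_mul_mem hA ih hu.1 hu.2 hb) (by simp)
        (fun x y hx hy => by simpa only [map_add] using add_mem hx hy) (hs k (not_le.1 hk) f hf hfk)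
    rwa [homogeneousComponent_eq_self hfk, reynolds_of_mem hK hf] at hmem
  intro f hf
  rw [← sum_homogeneousComponent f]
  refine sum_mem fun k _ => homogeneous_mem k _ (mem_invariants.2 fun g => ?_)
    (homogeneousComponent_isHomogeneous k f)
  rw [hA.map_homogeneousComponent, mem_invariants.1 hf]

theorem invariants_le_adjoinInvariantsLe_of_subgroup (hA : IsLinearAction A)
    (hK : (Fintype.card G : K) ≠ 0) (H : Subgroup G) [Fintype H]
    (hs : ∀ k > s, ∀ f : MvPolynomial σ K, f.IsHomogeneous k →
      f ∈ reynoldsComap (A.comp H.subtype) (augIdeal σ K) (H.index + 1)) :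
    invariants A ≤ adjoinInvariantsLe A s := by
  have hKH : (Fintype.card H : K) ≠ 0 := by
    obtain ⟨m, hm⟩ := H.card_subgroup_dvd_card
    rw [Nat.card_eq_fintype_card, Nat.card_eq_fintype_card] at hm
    rw [hm, Nat.cast_mul] at hK
    exact left_ne_zero_of_mul hK
  refine invariants_le_adjoinInvariantsLe hA hK fun k hk f hf hfk => ?_
  have hmem : reynolds (A.comp H.subtype) f ∈
      hilbertIdeal (A.comp H.subtype) (augIdeal σ K) ^ (H.index + 1) := hs k hk f hfk
  rw [reynolds_of_mem hKH (mem_invariants.2 fun h => mem_invariants.1 hf h), pow_succ] at hmem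
  refine Ideal.mul_mono (hilbertIdeal_comp_subtype_pow_index_le hK
    (fun g u => hA.map_mem_augIdeal g) H) ?_ hmem
  exact Ideal.span_le.2 fun u hu => hu.2

end LinearAction

/-! ### Two commuting elements -/

section Pair

variable {K : Type*} [Field K] {r s : ℕ}

/-- The two characters of `ZMod r × ZMod s` through which a pair of commuting elements of orders
`r` and `s` acts on its joint eigenspaces. -/
def pairChar (χ : AddChar (ZMod r) K) (θ : AddChar (ZMod s) K) :
    Fin 2 → AddChar (ZMod r × ZMod s) K :=
  ![χ.compAddMonoidHom (AddMonoidHom.fst _ _), θ.compAddMonoidHom (AddMonoidHom.snd _ _)]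

variable {R G : Type*} [CommRing R] [Algebra K R] [Group G] {A : G →* (R →ₐ[K] R)}
  {χ : AddChar (ZMod r) K} {θ : AddChar (ZMod s) K} {x y : G}

theorem mem_weightSpace_pairChar {w : ZMod r × ZMod s} {u : R} :
    u ∈ weightSpace A ![x, y] (pairChar χ θ) w ↔ A x u = χ w.1 • u ∧ A y u = θ w.2 • u := by
  simp [mem_weightSpace, Fin.forall_fin_two, pairChar]

theorem map_pow_apply (A : G →* (R →ₐ[K] R)) (g : G) (n : ℕ) (u : R) :
    ((A g).toLinearMap ^ n) u = A (g ^ n) u := by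
  induction n with
  | zero => simp
  | succ n ih => simp [pow_succ', ih]

theorem le_iSup_inf_weightSpace_pairChar [NeZero r] [NeZero s] (hχ : χ.IsPrimitive)
    (hθ : θ.IsPrimitive) (hxy : Commute x y) (hx : x ^ r = 1) (hy : y ^ s = 1)
    {V : Submodule K R} (hV : ∀ g, ∀ v ∈ V, A g v ∈ V) :
    V ≤ ⨆ w, V ⊓ weightSpace A ![x, y] (pairChar χ θ) w := by
  refine (le_iSup_inf_eigenspace hχ (T := (A x).toLinearMap) (hV x)
    fun v _ => by simp [map_pow_apply, hx]).trans (iSup_le fun a => ?_)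
  have hstable : ∀ v ∈ V ⊓ Module.End.eigenspace (A x).toLinearMap (χ a),
      A y v ∈ V ⊓ Module.End.eigenspace (A x).toLinearMap (χ a) := by
    rintro v ⟨hv, hxv⟩
    refine ⟨hV y v hv, Module.End.mem_eigenspace_iff.2 ?_⟩
    have hxv : A x v = χ a • v := Module.End.mem_eigenspace_iff.1 hxv
    change (A x * A y) v = _
    rw [← map_mul, hxy.eq, map_mul, AlgHom.mul_apply, hxv, map_smul]
  refine (le_iSup_inf_eigenspace hθ (T := (A y).toLinearMap) hstable
    fun v _ => by simp [map_pow_apply, hy]).trans (iSup_le fun b => ?_)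
  rintro v ⟨⟨hv, hxv⟩, hyv⟩
  exact Submodule.mem_iSup_of_mem (a, b) ⟨hv, mem_weightSpace_pairChar.2
    ⟨Module.End.mem_eigenspace_iff.1 hxv, Module.End.mem_eigenspace_iff.1 hyv⟩⟩

theorem iSup_inf_le_span {ι R : Type*} [AddCommGroup R] [Module K R] (V : Submodule K R)
    (W : ι → Submodule K R) :
    ⨆ i, V ⊓ W i ≤ Submodule.span K {u | u ∈ V ∧ ∃ i, u ∈ W i} :=
  iSup_le fun i _ hu => Submodule.subset_span ⟨hu.1, i, hu.2⟩

end Pair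

section PairBound

variable {σ K G : Type*} [Field K] [Group G] [Fintype G]
  {A : G →* (MvPolynomial σ K →ₐ[K] MvPolynomial σ K)} {p : ℕ} [Fact p.Prime]
  {χ : AddChar (ZMod p) K} {x y : G}

theorem mem_reynoldsComap_of_commute (hA : IsLinearAction A) (hK : (Fintype.card G : K) ≠ 0)
    (hχ : χ.IsPrimitive) (hxy : Commute x y) (hx : x ^ p = 1) (hy : y ^ p = 1)
    (hG : Subgroup.closure (Set.range ![x, y]) = ⊤) {n D : ℕ} (hD : p * n + p ≤ D)
    {f : MvPolynomial σ K} (hf : f.IsHomogeneous D) :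
    f ∈ reynoldsComap A (augIdeal σ K) (n + 1) := by
  have hV (g : G) : ∀ v ∈ homogeneousSubmodule σ K 1, A g v ∈ homogeneousSubmodule σ K 1 :=
    fun v hv => hA.map_isHomogeneous g hv
  refine mem_of_isHomogeneous_of_prod_mem
    ((le_iSup_inf_weightSpace_pairChar hχ hχ hxy hx hy hV).trans (iSup_inf_le_span _ _))
    (fun e he => ?_) hf
  choose heV w hw using he
  refine prod_mem_reynoldsComap hK hG (fun w hw => ?_) hw
    (fun i => mem_augIdeal_of_isHomogeneous one_ne_zero (heV i))
    fun h => hasZeroSumPartition_prod (by simpa using hD) h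
  have hw0 : w.1 = 0 ∧ w.2 = 0 := by
    simpa [Fin.forall_fin_two, pairChar, AddChar.IsPrimitive.zmod_char_eq_one_iff p hχ] using hw
  exact Prod.ext hw0.1 hw0.2

end PairBound

/-! ### Quaternion groups times cyclic groups -/

/-- `i` and `j` satisfy the relations of the quaternion group of order `8`, and `z` is an element
of exponent `q` commuting with both. -/
structure IsQuaternionTriple {G : Type*} [Group G] (q : ℕ) (i j z : G) : Prop where
  pow_four : i ^ 4 = 1
  sq_eq_sq : j ^ 2 = i ^ 2
  mul_eq_mul_inv : i * j = j * i⁻¹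
  commute_left : Commute z i
  commute_right : Commute z j
  pow_eq_one : z ^ q = 1

section Characters

variable {K : Type*} [Field K] {q : ℕ}

variable (K) in
/-- The character of `ZMod 2` taking the value `-1` at `1`. -/
def signChar : AddChar (ZMod 2) K := AddChar.zmodChar 2 (ζ := -1) (by simp)

theorem signChar_one : signChar K 1 = -1 :=
  (AddChar.zmodChar_apply _ 1).trans (pow_one _)

theorem signChar_isPrimitive (h2 : (2 : K) ≠ 0) : (signChar K).IsPrimitive := by
  refine AddChar.zmodChar_primitive_of_primitive_root 2
    (IsPrimitiveRoot.mk_of_lt (-1) two_pos (by simp) fun l hl hl2 => ?_)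
  obtain rfl : l = 1 := by omega
  rw [pow_one]
  exact fun h => h2 (by linear_combination -h)

/-- The three characters through which `i`, `j` and `z` act on the joint eigenspaces on which `i`
and `j` have eigenvalues `±1`. -/
def quaternionChar (χ : AddChar (ZMod q) K) :
    Fin 3 → AddChar ((ZMod 2 × ZMod 2) × ZMod q) K :=
  ![(signChar K).compAddMonoidHom ((AddMonoidHom.fst _ _).comp (AddMonoidHom.fst _ _)),
    (signChar K).compAddMonoidHom ((AddMonoidHom.snd _ _).comp (AddMonoidHom.fst _ _)),
    χ.compAddMonoidHom (AddMonoidHom.snd _ _)]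

theorem eq_zero_of_forall_quaternionChar [NeZero q] {χ : AddChar (ZMod q) K} (h2 : (2 : K) ≠ 0)
    (hχ : χ.IsPrimitive) {w : (ZMod 2 × ZMod 2) × ZMod q} (hw : ∀ k, quaternionChar χ k w = 1) :
    w = 0 := by
  have hw0 : w.1.1 = 0 ∧ w.1.2 = 0 ∧ w.2 = 0 := by
    simpa [Fin.forall_fin_succ, quaternionChar, AddChar.IsPrimitive.zmod_char_eq_one_iff q hχ,
      AddChar.IsPrimitive.zmod_char_eq_one_iff 2 (signChar_isPrimitive h2)] using hw
  exact Prod.ext (Prod.ext hw0.1 hw0.2.1) hw0.2.2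

theorem apply_two_eq_neg_one {χ₄ : AddChar (ZMod 4) K} (hχ₄ : χ₄.IsPrimitive) : χ₄ 2 = -1 := by
  have hne : χ₄ 2 ≠ 1 := fun h =>
    absurd ((AddChar.IsPrimitive.zmod_char_eq_one_iff 4 hχ₄ 2).1 h) (by decide)
  have hsq : χ₄ 2 * χ₄ 2 = 1 := by
    rw [← AddChar.map_add_eq_mul, show (2 + 2 : ZMod 4) = 0 by decide, AddChar.map_zero_eq_one]
  exact (mul_self_eq_one_iff.1 hsq).resolve_left hne

theorem two_ne_zero_of_isPrimitive {χ₄ : AddChar (ZMod 4) K} (hχ₄ : χ₄.IsPrimitive) :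
    (2 : K) ≠ 0 := by
  have h4 := natCast_ne_zero_of_isPrimitive hχ₄
  rw [show ((4 : ℕ) : K) = 2 * 2 by norm_num] at h4
  exact left_ne_zero_of_mul h4

end Characters

section QuaternionWeights

variable {K R G : Type*} [Field K] [CommRing R] [Algebra K R] [Group G] {A : G →* (R →ₐ[K] R)}
  {q : ℕ} {χ₄ : AddChar (ZMod 4) K} {χ : AddChar (ZMod q) K} {i j z : G}

theorem mem_weightSpace_quaternionChar {w : (ZMod 2 × ZMod 2) × ZMod q} {u : R} :
    u ∈ weightSpace A ![i, j, z] (quaternionChar χ) w ↔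
      A i u = signChar K w.1.1 • u ∧ A j u = signChar K w.1.2 • u ∧ A z u = χ w.2 • u := by
  simp [mem_weightSpace, Fin.forall_fin_succ, quaternionChar]

variable (A j) in
/-- The two vectors `x` and `j x`, which span an irreducible representation of `⟨i, j⟩` when `x` is
an eigenvector of `i` with eigenvalue of order four. -/
def oddVector (x : R) : Fin 2 → R := ![x, A j x]

variable (A χ i j z) in
/-- The vectors of `V` on which `i` and `j` act by `±1` and `z` by a value of `χ`. -/
def evenVectors (V : Submodule K R) : Set R :=
  {u | u ∈ V ∧ ∃ w, u ∈ weightSpace A ![i, j, z] (quaternionChar χ) w}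

variable (A χ₄ χ i j z) in
/-- The vectors of the form `x` or `j x` with `x ∈ V` an eigenvector of `i` with eigenvalue `χ₄ 1`
and of `z`. -/
def oddVectors (V : Submodule K R) : Set R :=
  {u | ∃ x ∈ V, ∃ ψ, x ∈ weightSpace A ![i, z] (pairChar χ₄ χ) (1, ψ) ∧ ∃ l, u = oddVector A j x l}

theorem act_inv_eq_smul {g : G} {c c' : K} (hc : c * c' = 1) {u : R} (hu : A g u = c • u) :
    A g⁻¹ u = c' • u := by
  have hu' : A g (c' • u) = u := by rw [map_smul, hu, smul_smul, mul_comm, hc, one_smul]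
  rw [← hu', ← AlgHom.mul_apply, ← map_mul, inv_mul_cancel, map_one, AlgHom.one_apply, hu']

namespace IsQuaternionTriple

theorem act_act (h : IsQuaternionTriple q i j z) (u : R) : A j (A j u) = A i (A i u) := by
  rw [← AlgHom.mul_apply, ← AlgHom.mul_apply, ← map_mul, ← map_mul, ← sq, ← sq, h.sq_eq_sq]

theorem act_act_of_mem (h : IsQuaternionTriple q i j z) {w : ZMod 4 × ZMod q} {u : R}
    (hu : u ∈ weightSpace A ![i, z] (pairChar χ₄ χ) w) : A j (A j u) = χ₄ (w.1 + w.1) • u := by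
  have hi := (mem_weightSpace_pairChar.1 hu).1
  rw [h.act_act, hi, map_smul, hi, smul_smul, AddChar.map_add_eq_mul]

theorem act_mem_weightSpace_neg (h : IsQuaternionTriple q i j z) {w : ZMod 4 × ZMod q} {u : R}
    (hu : u ∈ weightSpace A ![i, z] (pairChar χ₄ χ) w) :
    A j u ∈ weightSpace A ![i, z] (pairChar χ₄ χ) (-w.1, w.2) := by
  obtain ⟨hi, hz⟩ := mem_weightSpace_pairChar.1 hu
  have hinv : A i⁻¹ u = χ₄ (-w.1) • u :=
    act_inv_eq_smul (by rw [← AddChar.map_add_eq_mul, add_neg_cancel, AddChar.map_zero_eq_one]) hi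
  refine mem_weightSpace_pairChar.2 ⟨?_, ?_⟩
  · rw [← AlgHom.mul_apply, ← map_mul, h.mul_eq_mul_inv, map_mul, AlgHom.mul_apply, hinv, map_smul]
  · rw [← AlgHom.mul_apply, ← map_mul, h.commute_right.eq, map_mul, AlgHom.mul_apply, hz, map_smul]

theorem inf_weightSpace_le_span_evenVectors (h : IsQuaternionTriple q i j z) (h2 : (2 : K) ≠ 0)
    {V : Submodule K R} (hV : ∀ g, ∀ v ∈ V, A g v ∈ V) {a : ZMod 4} (ha : a + a = 0) {b : ZMod 2}
    (hab : χ₄ a = signChar K b) (ψ : ZMod q) :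
    V ⊓ weightSpace A ![i, z] (pairChar χ₄ χ) (a, ψ) ≤
      Submodule.span K (evenVectors A χ i j z V) := by
  refine (le_iSup_inf_eigenspace (signChar_isPrimitive h2) (T := (A j).toLinearMap)
    (W := V ⊓ weightSpace A ![i, z] (pairChar χ₄ χ) (a, ψ))
    (fun v hv => ⟨hV j v hv.1, ?_⟩) fun v hv => ?_).trans (iSup_le fun c v hv => ?_)
  · have hj := h.act_mem_weightSpace_neg hv.2
    rwa [neg_eq_of_add_eq_zero_left ha] at hj
  · rw [pow_two, Module.End.mul_apply]
    simpa [ha] using h.act_act_of_mem hv.2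
  · obtain ⟨⟨hvV, hv⟩, hj⟩ := hv
    obtain ⟨hi, hz⟩ := mem_weightSpace_pairChar.1 hv
    exact Submodule.subset_span ⟨hvV, ((b, c), ψ), mem_weightSpace_quaternionChar.2
      ⟨hab ▸ hi, Module.End.mem_eigenspace_iff.1 hj, hz⟩⟩

theorem le_span_evenVectors_union_oddVectors [NeZero q] (h : IsQuaternionTriple q i j z)
    (hχ₄ : χ₄.IsPrimitive) (hχ : χ.IsPrimitive) {V : Submodule K R}
    (hV : ∀ g, ∀ v ∈ V, A g v ∈ V) :
    V ≤ Submodule.span K (evenVectors A χ i j z V ∪ oddVectors A χ₄ χ i j z V) := by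
  have h2 := two_ne_zero_of_isPrimitive hχ₄
  refine (le_iSup_inf_weightSpace_pairChar hχ₄ hχ h.commute_left.symm h.pow_four h.pow_eq_one
    hV).trans (iSup_le ?_)
  rintro ⟨a, ψ⟩
  have hcases : a = 0 ∨ a = 1 ∨ a = 2 ∨ a = 3 := by
    revert a
    decide
  rcases hcases with rfl | rfl | rfl | rfl
  · exact (h.inf_weightSpace_le_span_evenVectors h2 hV (by decide) (b := 0) (by simp) ψ).trans
      (Submodule.span_mono Set.subset_union_left)
  · exact fun u hu => Submodule.subset_span (.inr ⟨u, hu.1, ψ, hu.2, 0, rfl⟩)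
  · exact (h.inf_weightSpace_le_span_evenVectors h2 hV (by decide) (b := 1)
      (by rw [apply_two_eq_neg_one hχ₄, signChar_one]) ψ).trans
      (Submodule.span_mono Set.subset_union_left)
  · refine fun u hu => Submodule.subset_span (.inr ?_)
    have hj := h.act_mem_weightSpace_neg hu.2
    have hjj := h.act_act_of_mem hu.2
    rw [show (-3 : ZMod 4) = 1 by decide] at hj
    rw [show (3 + 3 : ZMod 4) = 2 by decide, apply_two_eq_neg_one hχ₄, neg_one_smul] at hjj
    exact ⟨-A j u, V.neg_mem (hV j u hu.1), ψ, Submodule.neg_mem _ hj, 1, by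
      simp [oddVector, hjj]⟩

theorem pauliPairing_mem_weightSpace (h : IsQuaternionTriple q i j z) (hχ₄ : χ₄.IsPrimitive)
    {x y : R} {ψ θ : ZMod q} (hx : x ∈ weightSpace A ![i, z] (pairChar χ₄ χ) (1, ψ))
    (hy : y ∈ weightSpace A ![i, z] (pairChar χ₄ χ) (1, θ)) (s : ZMod 2 × ZMod 2) :
    pauliPairing s (oddVector A j x) (oddVector A j y) ∈
      weightSpace A ![i, j, z] (quaternionChar χ) (s, ψ + θ) := by
  have hneg : χ₄ (-1) = -χ₄ 1 := by
    rw [show (-1 : ZMod 4) = 1 + 2 by decide, AddChar.map_add_eq_mul, apply_two_eq_neg_one hχ₄,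
      mul_neg_one]
  have hsq : χ₄ 1 * χ₄ 1 = -1 := by
    rw [← AddChar.map_add_eq_mul, one_add_one_eq_two, apply_two_eq_neg_one hχ₄]
  have hact {x : R} {ψ : ZMod q} (hx : x ∈ weightSpace A ![i, z] (pairChar χ₄ χ) (1, ψ)) :
      (A i x = χ₄ 1 • x ∧ A z x = χ ψ • x) ∧
        (A i (A j x) = -χ₄ 1 • A j x ∧ A z (A j x) = χ ψ • A j x) ∧ A j (A j x) = -x := by
    refine ⟨mem_weightSpace_pairChar.1 hx, ?_, ?_⟩
    · rw [← hneg]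
      exact mem_weightSpace_pairChar.1 (h.act_mem_weightSpace_neg hx)
    · rw [h.act_act_of_mem hx, one_add_one_eq_two, apply_two_eq_neg_one hχ₄, neg_one_smul]
  obtain ⟨⟨hix, hzx⟩, ⟨hijx, hzjx⟩, hjjx⟩ := hact hx
  obtain ⟨⟨hiy, hzy⟩, ⟨hijy, hzjy⟩, hjjy⟩ := hact hy
  have hcases : s = (0, 0) ∨ s = (0, 1) ∨ s = (1, 0) ∨ s = (1, 1) := by
    revert s
    decide
  rw [mem_weightSpace_quaternionChar, AddChar.map_add_eq_mul]
  rcases hcases with rfl | rfl | rfl | rfl <;>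
    simp [pauliPairing, pauli, oddVector, Fin.sum_univ_two, hix, hzx, hijx, hzjx, hjjx, hiy, hzy,
      hijy, hzjy, hjjy, signChar_one, smul_smul, hsq, smul_add, mul_comm (χ θ), add_comm]

end IsQuaternionTriple

end QuaternionWeights

section QuaternionProducts

variable {K R G : Type*} [Field K] [CommRing R] [Algebra K R] [Group G] {A : G →* (R →ₐ[K] R)}
  {q : ℕ} {χ₄ : AddChar (ZMod 4) K} {χ : AddChar (ZMod q) K} {i j z : G} {V : Submodule K R}
  {M : Ideal R}

theorem act_act_eq_of_mem_evenVectors {u : R} (hu : u ∈ evenVectors A χ i j z V) :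
    A i (A i u) = u := by
  obtain ⟨-, w, hw⟩ := hu
  have hi := (mem_weightSpace_quaternionChar.1 hw).1
  rw [hi, map_smul, hi, smul_smul, ← AddChar.map_add_eq_mul, CharTwo.add_self_eq_zero,
    AddChar.map_zero_eq_one, one_smul]

theorem IsQuaternionTriple.act_act_eq_neg_of_mem_oddVectors (h : IsQuaternionTriple q i j z)
    (hχ₄ : χ₄.IsPrimitive) {u : R} (hu : u ∈ oddVectors A χ₄ χ i j z V) : A i (A i u) = -u := by
  obtain ⟨x, -, ψ, hx, l, rfl⟩ := hu
  have hx2 : A j (A j x) = -x := by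
    rw [h.act_act_of_mem hx, one_add_one_eq_two, apply_two_eq_neg_one hχ₄, neg_one_smul]
  rw [← h.act_act]
  fin_cases l <;> simp [oddVector, hx2]

theorem pauliPairing_mem {a b : Fin 2 → R} (ha : ∀ l, a l ∈ M) (s : ZMod 2 × ZMod 2) :
    pauliPairing s a b ∈ M :=
  sum_mem fun _ _ => sum_mem fun _ _ => zsmul_mem (M.mul_mem_right _ (ha _)) _

theorem oddVector_mem (hV : ∀ g, ∀ v ∈ V, A g v ∈ V) {x : R} (hx : x ∈ V) (l : Fin 2) :
    oddVector A j x l ∈ V := by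
  fin_cases l
  exacts [hx, hV j x hx]

variable [Fintype G]

theorem prod_mul_prod_mem_reynoldsComap_of_odd_card (h2 : (2 : K) ≠ 0) {α β : Type*} [Fintype α]
    [Fintype β] (hβ : Odd (Fintype.card β)) {g : G} {e : α → R} {o : β → R}
    (he : ∀ a, A g (A g (e a)) = e a) (ho : ∀ b, A g (A g (o b)) = -o b) (n : ℕ) :
    (∏ a, e a) * ∏ b, o b ∈ reynoldsComap A M n := by
  have hneg : (-1 : K) ≠ 1 := fun h => h2 (by linear_combination -h)
  have hact : A (g * g) ((∏ a, e a) * ∏ b, o b) = (-1 : K) • ((∏ a, e a) * ∏ b, o b) := by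
    simp [he, ho, prod_neg, hβ.neg_one_pow]
  change reynolds A _ ∈ hilbertIdeal A M ^ n
  rw [reynolds_eq_zero_of_act_eq_smul hneg hact]
  exact zero_mem _

variable [NeZero q] {κ : Type*} [Fintype κ] {n : ℕ} {x : κ × Fin 2 → R} {ψ : κ × Fin 2 → ZMod q}

theorem IsQuaternionTriple.prod_mul_prod_oddVector_mem (h : IsQuaternionTriple q i j z)
    (hK : (Fintype.card G : K) ≠ 0) (hG : Subgroup.closure (Set.range ![i, j, z]) = ⊤)
    (hχ₄ : χ₄.IsPrimitive) (hχ : χ.IsPrimitive) (hV : ∀ g, ∀ v ∈ V, A g v ∈ V)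
    (hVM : ∀ v ∈ V, v ∈ M) {α : Type*} [Fintype α] {e : α → R}
    (he : ∀ a, e a ∈ evenVectors A χ i j z V) (hxV : ∀ u, x u ∈ V)
    (hx : ∀ u, x u ∈ weightSpace A ![i, z] (pairChar χ₄ χ) (1, ψ u))
    (hcard : 2 * (q * n) + 2 ≤ Fintype.card α + Fintype.card κ) (l : κ × Fin 2 → Fin 2) :
    (∏ a, e a) * ∏ u, oddVector A j (x u) (l u) ∈ reynoldsComap A M (n + 1) := by
  have h2 := two_ne_zero_of_isPrimitive hχ₄
  choose heV w hw using he
  refine prod_mem_of_forall_pairingProd_mem h2 (v := fun u => oddVector A j (x u))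
    (J := (reynoldsComap A M (n + 1)).comap (LinearMap.mulLeft K (∏ a, e a))) (fun s => ?_) l
  have hmem := prod_mem_reynoldsComap hK hG (fun _ => eq_zero_of_forall_quaternionChar h2 hχ)
    (A := A) (M := M) (n := n + 1) (w := Sum.elim w fun k => (s k, pairSum ψ k))
    (u := Sum.elim e fun k => pauliPairing (s k) (oddVector A j (x (k, 0)))
      (oddVector A j (x (k, 1)))) ?_ ?_ fun h0 => ?_
  · simpa [Fintype.prod_sum_type, pairingProd] using hmem
  · rintro (a | k)
    exacts [hw a, h.pauliPairing_mem_weightSpace hχ₄ (hx _) (hx _) _]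
  · rintro (a | k)
    exacts [hVM _ (heV a), pauliPairing_mem (fun l => hVM _ (oddVector_mem hV (hxV _) l)) _]
  · exact hasZeroSumPartition_klein_prod (by simpa using hcard)
      ((Prod.fst_sum ..).symm.trans (congrArg Prod.fst h0))
      ((Prod.snd_sum ..).symm.trans (congrArg Prod.snd h0))

theorem IsQuaternionTriple.prod_oddVector_mem (h : IsQuaternionTriple q i j z)
    (hK : (Fintype.card G : K) ≠ 0) (hG : Subgroup.closure (Set.range ![i, j, z]) = ⊤)
    (hχ₄ : χ₄.IsPrimitive) (hχ : χ.IsPrimitive) (hV : ∀ g, ∀ v ∈ V, A g v ∈ V)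
    (hVM : ∀ v ∈ V, v ∈ M) (hxV : ∀ u, x u ∈ V)
    (hx : ∀ u, x u ∈ weightSpace A ![i, z] (pairChar χ₄ χ) (1, ψ u))
    (hq : 3 ≤ q) (hn : 1 ≤ n) (hcard : Fintype.card κ = 2 * (q * n) + 1)
    (l : κ × Fin 2 → Fin 2) :
    ∏ u, oddVector A j (x u) (l u) ∈ reynoldsComap A M (n + 1) := by
  have h2 := two_ne_zero_of_isPrimitive hχ₄
  have hpairing (σ : Equiv.Perm (κ × Fin 2)) (s : κ → ZMod 2 × ZMod 2)
      (hs : ∑ k, (s k, pairSum (ψ ∘ σ) k) = 0 →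
        HasZeroSumPartition (fun k => (s k, pairSum (ψ ∘ σ) k)) (n + 1) univ) :
      pairingProd ((fun u => oddVector A j (x u)) ∘ σ) s ∈ reynoldsComap A M (n + 1) :=
    prod_mem_reynoldsComap hK hG (fun _ => eq_zero_of_forall_quaternionChar h2 hχ)
      (fun k => h.pauliPairing_mem_weightSpace hχ₄ (hx _) (hx _) _)
      (fun k => pauliPairing_mem (fun l => hVM _ (oddVector_mem hV (hxV _) l)) _) hs
  by_cases hψ : ∑ u, ψ u = 0
  · exact prod_mem_of_pairingProd_mem h2 (by simpa using hq) hn (by simpa using hcard) hψ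
      (fun σ s hs => hpairing σ s fun h0 =>
        hs ((Prod.fst_sum ..).symm.trans (congrArg Prod.fst h0))) l
  · refine prod_mem_of_forall_pairingProd_mem h2 (fun s => hpairing 1 s fun h0 => absurd ?_ hψ) l
    rw [← sum_pairSum]
    exact (Prod.snd_sum ..).symm.trans (congrArg Prod.snd h0)

theorem IsQuaternionTriple.prod_mem_of_mem_union (h : IsQuaternionTriple q i j z)
    (hK : (Fintype.card G : K) ≠ 0) (hG : Subgroup.closure (Set.range ![i, j, z]) = ⊤)
    (hχ₄ : χ₄.IsPrimitive) (hχ : χ.IsPrimitive) (hV : ∀ g, ∀ v ∈ V, A g v ∈ V)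
    (hVM : ∀ v ∈ V, v ∈ M) {ι : Type*} [Fintype ι] {n : ℕ}
    (hι : 4 * (q * n) + 3 ≤ Fintype.card ι ∨
      Fintype.card ι = 4 * (q * n) + 2 ∧ 3 ≤ q ∧ 1 ≤ n) {e : ι → R}
    (he : ∀ a, e a ∈ evenVectors A χ i j z V ∪ oddVectors A χ₄ χ i j z V) :
    ∏ a, e a ∈ reynoldsComap A M (n + 1) := by
  classical
  let IsEven a := e a ∈ evenVectors A χ i j z V
  have hodd (b : {a // ¬ IsEven a}) : e b ∈ oddVectors A χ₄ χ i j z V := (he b).resolve_left b.2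
  have hcard : Fintype.card {a // IsEven a} + Fintype.card {a // ¬ IsEven a} = Fintype.card ι := by
    rw [Fintype.card_subtype_compl, Nat.add_sub_cancel' (Fintype.card_subtype_le _)]
  rw [← Fintype.prod_subtype_mul_prod_subtype IsEven e]
  obtain ⟨m, hm | hm⟩ := Nat.even_or_odd' (Fintype.card {a // ¬ IsEven a})
  · choose x hxV ψ hx l hl using hodd
    let φ : Fin m × Fin 2 ≃ {a // ¬ IsEven a} := Fintype.equivOfCardEq (by simp [hm, mul_comm])
    simp only [hl]
    rw [← φ.prod_comp]
    by_cases hlarge : 2 * (q * n) + 2 ≤ Fintype.card {a // IsEven a} + m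
    · exact h.prod_mul_prod_oddVector_mem hK hG hχ₄ hχ hV hVM (fun a => a.2) (fun u => hxV (φ u))
        (fun u => hx (φ u)) (by simpa using hlarge) fun u => l (φ u)
    · have : IsEmpty {a // IsEven a} := Fintype.card_eq_zero_iff.1 (by omega)
      obtain ⟨hι, hq, hn⟩ := hι.resolve_left (by omega)
      rw [Fintype.prod_empty, one_mul]
      exact h.prod_oddVector_mem hK hG hχ₄ hχ hV hVM (fun u => hxV (φ u)) (fun u => hx (φ u))
        hq hn (by rw [Fintype.card_fin]; omega) fun u => l (φ u)
  · exact prod_mul_prod_mem_reynoldsComap_of_odd_card (two_ne_zero_of_isPrimitive hχ₄) ⟨m, hm⟩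
      (fun a => act_act_eq_of_mem_evenVectors a.2)
      (fun b => h.act_act_eq_neg_of_mem_oddVectors hχ₄ (hodd b)) _

end QuaternionProducts

section QuaternionBound

variable {σ K G : Type*} [Field K] [Group G] [Fintype G]
  {A : G →* (MvPolynomial σ K →ₐ[K] MvPolynomial σ K)} {q : ℕ} [NeZero q]
  {χ₄ : AddChar (ZMod 4) K} {χ : AddChar (ZMod q) K} {i j z : G}

theorem IsQuaternionTriple.mem_reynoldsComap (h : IsQuaternionTriple q i j z)
    (hA : IsLinearAction A) (hK : (Fintype.card G : K) ≠ 0)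
    (hG : Subgroup.closure (Set.range ![i, j, z]) = ⊤) (hχ₄ : χ₄.IsPrimitive)
    (hχ : χ.IsPrimitive) {n D : ℕ}
    (hD : 4 * (q * n) + 3 ≤ D ∨ D = 4 * (q * n) + 2 ∧ 3 ≤ q ∧ 1 ≤ n)
    {f : MvPolynomial σ K} (hf : f.IsHomogeneous D) :
    f ∈ reynoldsComap A (augIdeal σ K) (n + 1) := by
  have hV (g : G) : ∀ v ∈ homogeneousSubmodule σ K 1, A g v ∈ homogeneousSubmodule σ K 1 :=
    fun v hv => hA.map_isHomogeneous g hv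
  exact mem_of_isHomogeneous_of_prod_mem (h.le_span_evenVectors_union_oddVectors hχ₄ hχ hV)
    (fun e he => h.prod_mem_of_mem_union hK hG hχ₄ hχ hV
      (fun v hv => mem_augIdeal_of_isHomogeneous one_ne_zero hv) (by simpa using hD) he) hf

end QuaternionBound

/-! ### Extension of scalars -/

section BaseChange

variable {σ F : Type*} [Field F] {G : Type*} [Group G] (K : Type*) [Field K] [Algebra F K]
  (A : G →* (MvPolynomial σ F →ₐ[F] MvPolynomial σ F))

theorem aeval_map_X_map (φ : MvPolynomial σ F →ₐ[F] MvPolynomial σ F)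
    (f : MvPolynomial σ F) :
    aeval (fun i => map (algebraMap F K) (φ (X i))) (map (algebraMap F K) f) =
      map (algebraMap F K) (φ f) := by
  induction f using MvPolynomial.induction_on with
  | C a => simp [← algebraMap_eq]
  | add p q hp hq => simp only [map_add, hp, hq]
  | mul_X p i hp => simp only [map_mul, hp, map_X, aeval_X]

/-- The extension of scalars of an action on a polynomial ring. -/
noncomputable def baseChange : G →* (MvPolynomial σ K →ₐ[K] MvPolynomial σ K) where
  toFun g := aeval fun i => map (algebraMap F K) (A g (X i))
  map_one' := algHom_ext fun i => by simp
  map_mul' g h := algHom_ext fun i => by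
    rw [AlgHom.mul_apply, aeval_X, aeval_X, aeval_map_X_map, map_mul, AlgHom.mul_apply]

variable {A}

theorem baseChange_map (g : G) (f : MvPolynomial σ F) :
    baseChange K A g (map (algebraMap F K) f) = map (algebraMap F K) (A g f) :=
  aeval_map_X_map K (A g) f

theorem IsLinearAction.baseChange (hA : IsLinearAction A) :
    IsLinearAction (NoetherNumber.baseChange K A) := fun g i => by
  simpa [NoetherNumber.baseChange] using (hA g i).map (algebraMap F K)

theorem reynolds_baseChange_map [Fintype G] (f : MvPolynomial σ F) :
    reynolds (baseChange K A) (map (algebraMap F K) f) =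
      map (algebraMap F K) (reynolds A f) :=
  (map_reynolds (mapAlgHom (Algebra.ofId F K)) (fun g f => (baseChange_map K g f).symm) f).symm

-- A linear functional vanishing on `T` but not at `f` extends to a `K`-linear functional.
theorem mem_of_map_mem_span {T : Submodule F (MvPolynomial σ F)} {f : MvPolynomial σ F}
    (hf : map (algebraMap F K) f ∈ Submodule.span K (map (algebraMap F K) '' T)) : f ∈ T := by
  by_contra hfT
  obtain ⟨l, hlf, hlT⟩ := Submodule.exists_le_ker_of_notMem hfT
  let L : MvPolynomial σ K →ₗ[K] K :=
    (basisMonomials σ K).constr K fun m => algebraMap F K (l (monomial m 1))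
  have hmonomial (m : σ →₀ ℕ) : L (monomial m 1) = algebraMap F K (l (monomial m 1)) := by
    rw [← congrFun (coe_basisMonomials σ K) m, Module.Basis.constr_basis]
  have hL (h : MvPolynomial σ F) : L (map (algebraMap F K) h) = algebraMap F K (l h) := by
    induction h using MvPolynomial.induction_on' with
    | monomial m a =>
      have hm : monomial m a = a • monomial m (1 : F) := by
        rw [smul_monomial, smul_eq_mul, mul_one]
      have hmK : monomial m (algebraMap F K a) = algebraMap F K a • monomial m (1 : K) := by
        rw [smul_monomial, smul_eq_mul, mul_one]
      rw [map_monomial, hmK, hm, map_smul, map_smul, hmonomial, smul_eq_mul, smul_eq_mul, map_mul]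
    | add p q hp hq => simp only [map_add, hp, hq]
  have hker : Submodule.span K (map (algebraMap F K) '' T) ≤ LinearMap.ker L := by
    refine Submodule.span_le.2 ?_
    rintro _ ⟨h, hh, rfl⟩
    exact (hL h).trans (by rw [LinearMap.mem_ker.1 (hlT hh), map_zero])
  exact hlf ((map_eq_zero _).1 ((hL f).symm.trans (hker hf)))

theorem mem_adjoin_of_map_mem_adjoin {S : Set (MvPolynomial σ F)} {f : MvPolynomial σ F}
    (hf : map (algebraMap F K) f ∈ Algebra.adjoin K (map (algebraMap F K) '' S)) :
    f ∈ Algebra.adjoin F S := by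
  refine mem_of_map_mem_span K (T := (Algebra.adjoin F S).toSubmodule) ?_
  have hclosure : Submonoid.closure (map (algebraMap F K) '' S) ≤
      (Algebra.adjoin F S).toSubmonoid.map (map (algebraMap F K)) :=
    Submonoid.closure_le.2 (Set.image_mono Algebra.subset_adjoin)
  rw [← Subalgebra.mem_toSubmodule, Algebra.adjoin_eq_span] at hf
  exact Submodule.span_mono hclosure hf

theorem adjoinInvariantsLe_baseChange_le [Fintype G] (hA : IsLinearAction A)
    (hK : (Fintype.card G : K) ≠ 0) (s : ℕ) :
    adjoinInvariantsLe (baseChange K A) s ≤ Algebra.adjoin K (map (algebraMap F K) ''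
      {u | u ∈ invariants A ∧ u.totalDegree ≤ s}) := by
  refine Algebra.adjoin_le ?_
  rintro u ⟨hu, hdeg⟩
  have hsum : u = ∑ m ∈ u.support, u.coeff m •
      map (algebraMap F K) (reynolds A (monomial m 1)) := by
    conv_lhs => rw [← reynolds_of_mem hK hu, ← support_sum_monomial_coeff u, map_sum]
    refine sum_congr rfl fun m _ => ?_
    rw [← reynolds_baseChange_map, map_monomial, map_one, ← map_smul, smul_monomial, smul_eq_mul,
      mul_one]
  rw [SetLike.mem_coe, hsum]
  refine sum_mem fun m hm => Subalgebra.smul_mem _ (Algebra.subset_adjoin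
    (Set.mem_image_of_mem _ (Set.mem_ofPred.2 ⟨reynolds_mem_invariants A _, ?_⟩))) _
  exact (hA.reynolds_isHomogeneous (isHomogeneous_monomial _ rfl)).totalDegree_le.trans
    ((le_totalDegree hm).trans hdeg)

theorem natCast_ne_zero_of_algebra {n : ℕ} (hF : (n : F) ≠ 0) : (n : K) ≠ 0 := by
  rwa [← map_natCast (algebraMap F K), map_ne_zero]

theorem invariants_le_adjoinInvariantsLe_of_baseChange [Fintype G] (hA : IsLinearAction A)
    (hF : (Fintype.card G : F) ≠ 0) {s : ℕ}
    (h : invariants (baseChange K A) ≤ adjoinInvariantsLe (baseChange K A) s) :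
    invariants A ≤ adjoinInvariantsLe A s := by
  have hK : (Fintype.card G : K) ≠ 0 := natCast_ne_zero_of_algebra K hF
  intro f hf
  refine mem_adjoin_of_map_mem_adjoin K (adjoinInvariantsLe_baseChange_le K hA hK s (h ?_))
  exact mem_invariants.2 fun g => by rw [baseChange_map, mem_invariants.1 hf]

end BaseChange

section AlgClosed

variable {σ F : Type*} [Field F] {G : Type*} [Group G]
  {A : G →* (MvPolynomial σ F →ₐ[F] MvPolynomial σ F)}

theorem exists_isPrimitive_addChar (K : Type*) [Field K] [IsAlgClosed K] {n : ℕ} [NeZero n]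
    (hn : (n : K) ≠ 0) : ∃ χ : AddChar (ZMod n) K, χ.IsPrimitive := by
  have : NeZero (n : K) := ⟨hn⟩
  obtain ⟨ζ, hζ⟩ := HasEnoughRootsOfUnity.exists_primitiveRoot K n
  exact ⟨_, AddChar.zmodChar_primitive_of_primitive_root n hζ⟩

theorem closure_range_eq_top {ι : Type*} {H : Subgroup G} {v : ι → H}
    (hv : Subgroup.closure (Subtype.val '' Set.range v) = H) :
    Subgroup.closure (Set.range v) = ⊤ := by
  refine Subgroup.map_injective H.subtype_injective ?_
  rw [MonoidHom.map_closure, ← MonoidHom.range_eq_map, Subgroup.range_subtype]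
  exact hv

theorem mul_index_le_div [Fintype G] {H : Subgroup G} {m n : ℕ} (hn : 0 < n)
    (h : m * n ≤ Nat.card H) : m * H.index ≤ Fintype.card G / n := by
  rw [Nat.le_div_iff_mul_le hn, ← Nat.card_eq_fintype_card, ← H.card_mul_index, mul_right_comm]
  exact Nat.mul_le_mul_right _ h

theorem natCast_card_subgroup_ne_zero [Fintype G] (H : Subgroup G) [Fintype H]
    (hF : (Fintype.card G : F) ≠ 0) : (Fintype.card H : F) ≠ 0 := by
  refine ne_zero_of_dvd_ne_zero hF (Nat.cast_dvd_cast ?_)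
  simpa only [Nat.card_eq_fintype_card] using H.card_subgroup_dvd_card

/-- `x` and `y` generate a subgroup isomorphic to `C_p × C_p`, for a prime `p`. The last field says
that there are no further relations. -/
structure IsElementaryPair (p : ℕ) (x y : G) : Prop where
  pow_left : x ^ p = 1
  pow_right : y ^ p = 1
  commute : Commute x y
  le_card : p * p ≤ Nat.card (Subgroup.closure {x, y})

theorem IsElementaryPair.invariants_le [Fintype G] {p : ℕ} [Fact p.Prime] {x y : G}
    (h : IsElementaryPair p x y) (hp : p ∣ Fintype.card G) (hA : IsLinearAction A)
    (hF : (Fintype.card G : F) ≠ 0) :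
    invariants A ≤ adjoinInvariantsLe A (Fintype.card G / p + p - 1) := by
  classical
  have hp0 : 0 < p := (Fact.out : p.Prime).pos
  let K := AlgebraicClosure F
  have hK : (Fintype.card G : K) ≠ 0 := natCast_ne_zero_of_algebra K hF
  let H := Subgroup.closure {x, y}
  have hindex : p * H.index ≤ Fintype.card G / p := mul_index_le_div hp0 h.le_card
  obtain ⟨χ, hχ⟩ := exists_isPrimitive_addChar K
    (ne_zero_of_dvd_ne_zero hK (Nat.cast_dvd_cast hp))
  refine invariants_le_adjoinInvariantsLe_of_baseChange K hA hF
    (invariants_le_adjoinInvariantsLe_of_subgroup (hA.baseChange K) hK H fun k hk f hf => ?_)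
  refine mem_reynoldsComap_of_commute (x := ⟨x, Subgroup.subset_closure (by simp)⟩)
    (y := ⟨y, Subgroup.subset_closure (by simp)⟩) ((hA.baseChange K).comp _)
    (natCast_card_subgroup_ne_zero H hK) hχ (Subtype.ext h.commute.eq) (Subtype.ext h.pow_left)
    (Subtype.ext h.pow_right) (closure_range_eq_top ?_) (by omega) hf
  simp only [Matrix.range_cons, Matrix.range_empty, Set.union_empty, Set.singleton_union,
    Set.image_insert_eq, Set.image_singleton, H]

theorem IsQuaternionTriple.invariants_le [Fintype G] {q : ℕ} {i j z : G}
    (h : IsQuaternionTriple q i j z) (hcard : 8 * q ≤ Nat.card (Subgroup.closure {i, j, z}))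
    (h2 : 2 ∣ Fintype.card G) (hq : q ∣ Fintype.card G) (hA : IsLinearAction A)
    (hF : (Fintype.card G : F) ≠ 0) {s : ℕ}
    (hs : Fintype.card G / 2 + 2 ≤ s ∨ Fintype.card G / 2 + 1 ≤ s ∧ 3 ≤ q) :
    invariants A ≤ adjoinInvariantsLe A s := by
  classical
  have : NeZero q := ⟨ne_zero_of_dvd_ne_zero Fintype.card_ne_zero hq⟩
  let K := AlgebraicClosure F
  have hK : (Fintype.card G : K) ≠ 0 := natCast_ne_zero_of_algebra K hF
  let H := Subgroup.closure {i, j, z}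
  have hH : 4 * q * 2 ≤ Nat.card H := by rwa [mul_right_comm]
  have hindex : 4 * q * H.index ≤ Fintype.card G / 2 := mul_index_le_div two_pos hH
  have hindex_pos : 1 ≤ H.index := Nat.one_le_iff_ne_zero.2 H.index_ne_zero_of_finite
  have h4 : ((4 : ℕ) : K) ≠ 0 := by
    have := ne_zero_of_dvd_ne_zero hK (Nat.cast_dvd_cast h2)
    rw [show 4 = 2 * 2 from rfl, Nat.cast_mul]
    exact mul_ne_zero this this
  obtain ⟨χ₄, hχ₄⟩ := exists_isPrimitive_addChar K h4
  obtain ⟨χ, hχ⟩ := exists_isPrimitive_addChar K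
    (ne_zero_of_dvd_ne_zero hK (Nat.cast_dvd_cast hq))
  refine invariants_le_adjoinInvariantsLe_of_baseChange K hA hF
    (invariants_le_adjoinInvariantsLe_of_subgroup (hA.baseChange K) hK H fun k hk f hf => ?_)
  have hsub : IsQuaternionTriple q (⟨i, Subgroup.subset_closure (by simp)⟩ : H)
      ⟨j, Subgroup.subset_closure (by simp)⟩ ⟨z, Subgroup.subset_closure (by simp)⟩ :=
    ⟨Subtype.ext h.pow_four, Subtype.ext h.sq_eq_sq, Subtype.ext h.mul_eq_mul_inv,
      Subtype.ext h.commute_left.eq, Subtype.ext h.commute_right.eq, Subtype.ext h.pow_eq_one⟩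
  refine hsub.mem_reynoldsComap ((hA.baseChange K).comp _) (natCast_card_subgroup_ne_zero H hK)
    (closure_range_eq_top ?_) hχ₄ hχ ?_ hf
  · simp only [Matrix.range_cons, Matrix.range_empty, Set.union_empty, Set.singleton_union,
      Set.image_insert_eq, Set.image_singleton, H]
  · rw [← mul_assoc]
    omega

end AlgClosed

/-! ### Subgroups of type `C_p × C_p` in `p`-groups -/

section Conjugation

variable {G : Type*} [Group G] {a b : G} {t : ℤ}

theorem zpow_eq_zpow_iff_orderOf_dvd_sub {m n : ℤ} :
    a ^ m = a ^ n ↔ (orderOf a : ℤ) ∣ m - n := by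
  rw [zpow_eq_zpow_iff_modEq, Int.modEq_comm, Int.modEq_iff_dvd]

theorem conj_zpow_of_conj_eq_zpow (h : b * a * b⁻¹ = a ^ t) (n : ℤ) :
    b * a ^ n * b⁻¹ = a ^ (t * n) := by
  rw [zpow_mul, ← h, conj_zpow]

theorem pow_conj_of_conj_eq_zpow (h : b * a * b⁻¹ = a ^ t) (n : ℕ) :
    b ^ n * a * (b ^ n)⁻¹ = a ^ t ^ n := by
  induction n with
  | zero => simp
  | succ n ih =>
    calc b ^ (n + 1) * a * (b ^ (n + 1))⁻¹ = b * (b ^ n * a * (b ^ n)⁻¹) * b⁻¹ := by group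
      _ = a ^ t ^ (n + 1) := by rw [ih, conj_zpow_of_conj_eq_zpow h, pow_succ']

theorem zpow_mul_pow_of_conj_eq_zpow (h : b * a * b⁻¹ = a ^ t) (c : ℤ) (n : ℕ) :
    (a ^ c * b) ^ n = a ^ (c * ∑ i ∈ range n, t ^ i) * b ^ n := by
  induction n with
  | zero => simp
  | succ n ih =>
    have hconj := conj_zpow_of_conj_eq_zpow (pow_conj_of_conj_eq_zpow h n) c
    rw [pow_succ, ih, sum_range_succ, mul_add, zpow_add, mul_comm c (t ^ n), ← hconj, pow_succ]
    group

theorem zpow_mul_mem_zpowers_iff {c : ℤ} :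
    a ^ c * b ∈ Subgroup.zpowers a ↔ b ∈ Subgroup.zpowers a :=
  Subgroup.mul_mem_cancel_left _ (Subgroup.zpow_mem_zpowers a c)

theorem orderOf_dvd_mul_sub_one {n : ℕ} {s : ℤ} (hconj : b * a * b⁻¹ = a ^ t)
    (hb : b ^ n = a ^ s) : (orderOf a : ℤ) ∣ s * (t - 1) := by
  have hfix : a ^ (t * s) = a ^ s := by
    rw [← conj_zpow_of_conj_eq_zpow hconj, ← hb]
    group
  rw [zpow_eq_zpow_iff_orderOf_dvd_sub] at hfix
  rwa [mul_sub_one, mul_comm s t]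

theorem orderOf_dvd_pow_sub_one {n : ℕ} {s : ℤ} (hconj : b * a * b⁻¹ = a ^ t)
    (hb : b ^ n = a ^ s) : (orderOf a : ℤ) ∣ t ^ n - 1 := by
  rw [← zpow_eq_zpow_iff_orderOf_dvd_sub, zpow_one, ← pow_conj_of_conj_eq_zpow hconj, hb]
  group

theorem sq_conj_ne_inv (ha : 4 ∣ orderOf a) (hconj : b * a * b⁻¹ = a ^ t) :
    b ^ 2 * a * (b ^ 2)⁻¹ ≠ a⁻¹ := by
  intro h
  rw [pow_conj_of_conj_eq_zpow hconj, ← zpow_neg_one, zpow_eq_zpow_iff_orderOf_dvd_sub] at h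
  have h4 : (4 : ℤ) ∣ t ^ 2 - -1 := (Int.natCast_dvd_natCast.2 ha).trans h
  rcases Int.even_or_odd' t with ⟨w, rfl | rfl⟩ <;> ring_nf at h4 <;> omega

end Conjugation

/-- `a` and `b` satisfy the defining relations of the dicyclic group of order `4n`, and `a` has
exact order `2n`. -/
structure IsDicyclicPair {G : Type*} [Group G] (n : ℕ) (a b : G) : Prop where
  orderOf_eq : orderOf a = 2 * n
  sq_eq : b ^ 2 = a ^ n
  conj_eq : b * a * b⁻¹ = a⁻¹

section GeomSum

theorem exists_sum_pow_eq_prime_mul {p : ℕ} (hp : p.Prime) (hp2 : p ≠ 2) {t : ℤ}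
    (ht : (p : ℤ) ∣ t - 1) : ∃ n : ℤ, ∑ i ∈ range p, t ^ i = p * n ∧ IsCoprime (p : ℤ) n := by
  obtain ⟨w, hw⟩ := ht
  obtain ⟨y, hy⟩ := odd_sq_dvd_geom_sum₂_sub (a := (1 : ℤ)) (b := w) (hp.odd_of_ne_two hp2)
  obtain rfl : t = 1 + p * w := by linear_combination hw
  simp only [one_pow, mul_one] at hy
  exact ⟨1 + p * y, by linear_combination hy, -y, 1, by ring⟩

theorem exists_one_add_eq_two_mul {t : ℤ} (ht : t % 4 = 1) :
    ∃ n : ℤ, 1 + t = 2 * n ∧ IsCoprime 2 n :=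
  ⟨1 + 2 * (t / 4), by omega, -(t / 4), 1, by ring⟩

end GeomSum

section PrimePower

variable {G : Type*} [Group G] {p : ℕ} {a b : G}

theorem mem_zpowers_of_sum_pow {t s n : ℤ} {k : ℕ} (ha : orderOf a = p ^ k)
    (hu : ∀ x : G, x ^ p = 1 → x ∈ Subgroup.zpowers a) (hconj : b * a * b⁻¹ = a ^ t)
    (hb : b ^ p = a ^ (p * s)) (hsum : ∑ i ∈ range p, t ^ i = p * n)
    (hn : IsCoprime (p : ℤ) n) : b ∈ Subgroup.zpowers a := by
  obtain ⟨v, u, huv⟩ : IsCoprime (orderOf a : ℤ) n := by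
    rw [ha, Nat.cast_pow]
    exact hn.pow_left
  rw [← zpow_mul_mem_zpowers_iff (c := -(s * u))]
  refine hu _ ?_
  rw [zpow_mul_pow_of_conj_eq_zpow hconj, hsum, hb, ← zpow_add]
  refine orderOf_dvd_iff_zpow_eq_one.1 ⟨p * s * v, ?_⟩
  linear_combination (-(p : ℤ) * s) * huv

theorem sq_eq_pow_of_conj_eq_zpow {t s : ℤ} {k : ℕ} (ha : orderOf a = 2 ^ (k + 1))
    (hu : ∀ x : G, x ^ 2 = 1 → x ∈ Subgroup.zpowers a) (hb : b ∉ Subgroup.zpowers a)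
    (hconj : b * a * b⁻¹ = a ^ t) (hbs : b ^ 2 = a ^ s) (ht : t % 4 = 3) : b ^ 2 = a ^ 2 ^ k := by
  obtain ⟨w, hw⟩ : ∃ w, t - 1 = 2 * (2 * w + 1) := ⟨t / 4, by omega⟩
  have hdvd : (orderOf a : ℤ) ∣ s * 2 := by
    have h := orderOf_dvd_mul_sub_one hconj hbs
    rw [hw, ← mul_assoc] at h
    refine IsCoprime.dvd_of_dvd_mul_right ?_ h
    rw [ha, Nat.cast_pow]
    exact IsCoprime.pow_left ⟨-w, 1, by push_cast; ring⟩
  obtain ⟨u, rfl⟩ : (2 ^ k : ℤ) ∣ s := by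
    rw [ha, Nat.cast_pow, Nat.cast_ofNat, pow_succ] at hdvd
    exact Int.dvd_of_mul_dvd_mul_right two_ne_zero hdvd
  have hu_odd : u % 2 = 1 := by
    by_contra hu_even
    refine hb (hu b ?_)
    rw [hbs]
    obtain ⟨v, rfl⟩ : ∃ v, u = 2 * v := ⟨u / 2, by omega⟩
    refine orderOf_dvd_iff_zpow_eq_one.1 ⟨v, ?_⟩
    rw [ha]
    push_cast
    ring
  rw [hbs, ← zpow_natCast, zpow_eq_zpow_iff_orderOf_dvd_sub, ha]
  obtain ⟨v, rfl⟩ : ∃ v, u = 2 * v + 1 := ⟨u / 2, by omega⟩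
  exact ⟨v, by push_cast; ring⟩

-- Both `b` and `a * b` square to the involution of `⟨a⟩`, and comparing the squares gives
-- `b * a * b⁻¹ = a⁻¹`.
theorem IsDicyclicPair.of_conj_eq_zpow {t s : ℤ} {k : ℕ} (ha : orderOf a = 2 ^ (k + 1))
    (hu : ∀ x : G, x ^ 2 = 1 → x ∈ Subgroup.zpowers a) (hb : b ∉ Subgroup.zpowers a)
    (hconj : b * a * b⁻¹ = a ^ t) (hbs : b ^ 2 = a ^ s) (ht : t % 4 = 3) :
    IsDicyclicPair (2 ^ k) a b := by
  have hb2 : b ^ 2 = a ^ 2 ^ k := sq_eq_pow_of_conj_eq_zpow ha hu hb hconj hbs ht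
  have hab2 : (a * b) ^ 2 = a ^ 2 ^ k := by
    refine sq_eq_pow_of_conj_eq_zpow (s := 1 + t + s) ha hu ?_ ?_ ?_ ht
    · simpa only [zpow_one] using (zpow_mul_mem_zpowers_iff (c := 1)).not.2 hb
    · rw [mul_inv_rev, mul_assoc a, mul_assoc a, ← mul_assoc _ b⁻¹, hconj]
      group
    · have h := zpow_mul_pow_of_conj_eq_zpow hconj 1 2
      rwa [zpow_one, hbs, ← zpow_add, one_mul, sum_range_succ, sum_range_one, pow_zero,
        pow_one] at h
  refine ⟨by rw [ha, pow_succ'], hb2, eq_inv_of_mul_eq_one_right ?_⟩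
  calc a * (b * a * b⁻¹) = (a * b) ^ 2 * (b ^ 2)⁻¹ := by
        rw [sq, sq]
        group
    _ = 1 := by rw [hab2, hb2, mul_inv_cancel]

theorem exists_isDicyclicPair_of_pow_mem_zpowers (hp : p.Prime) {t : ℤ} {k : ℕ}
    (ha : orderOf a = p ^ k) (hu : ∀ x : G, x ^ p = 1 → x ∈ Subgroup.zpowers a)
    (hb : b ∉ Subgroup.zpowers a) (hbp : b ^ p ∈ Subgroup.zpowers a)
    (hconj : b * a * b⁻¹ = a ^ t) (hcomm : b * a * b⁻¹ ≠ a) :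
    p = 2 ∧ ∃ l, IsDicyclicPair (2 * l) a b := by
  have : Fact p.Prime := ⟨hp⟩
  have hpi : Prime (p : ℤ) := Nat.prime_iff_prime_int.1 hp
  obtain ⟨s, hs⟩ := Subgroup.mem_zpowers_iff.1 hbp
  have ht1 : ¬ (p ^ k : ℤ) ∣ t - 1 := by
    rwa [← Nat.cast_pow, ← ha, ← zpow_eq_zpow_iff_orderOf_dvd_sub, zpow_one, ← hconj]
  obtain ⟨k, rfl⟩ := Nat.exists_eq_succ_of_ne_zero (n := k) (by rintro rfl; simp at ht1)
  have hpt : (p : ℤ) ∣ t - 1 := by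
    have h : (p : ℤ) ∣ t ^ p - 1 := (Int.natCast_dvd_natCast.2 (ha ▸ dvd_pow_self p
      k.succ_ne_zero)).trans (orderOf_dvd_pow_sub_one hconj hs.symm)
    rw [← ZMod.intCast_zmod_eq_zero_iff_dvd] at h ⊢
    push_cast at h ⊢
    rwa [ZMod.pow_card] at h
  obtain ⟨s', rfl⟩ : (p : ℤ) ∣ s := by
    by_contra hps
    refine ht1 (IsCoprime.dvd_of_dvd_mul_left
      (IsCoprime.pow_left (hpi.coprime_iff_not_dvd.2 hps)) ?_)
    simpa only [ha, Nat.cast_pow] using orderOf_dvd_mul_sub_one hconj hs.symm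
  obtain rfl : p = 2 := by
    by_contra hp2
    obtain ⟨n, hsum, hn⟩ := exists_sum_pow_eq_prime_mul hp hp2 hpt
    exact hb (mem_zpowers_of_sum_pow ha hu hconj hs.symm hsum hn)
  have ht4 : t % 4 = 3 := by
    by_contra ht3
    obtain ⟨n, hsum, hn⟩ := exists_one_add_eq_two_mul (t := t) (by push_cast at hpt; omega)
    refine hb (mem_zpowers_of_sum_pow ha hu hconj hs.symm (n := n) ?_ hn)
    simpa [sum_range_succ] using hsum
  have hdic := IsDicyclicPair.of_conj_eq_zpow ha hu hb hconj hs.symm ht4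
  obtain ⟨k, rfl⟩ := Nat.exists_eq_succ_of_ne_zero (n := k) (by
    rintro rfl
    exact ht1 (by simpa using hpt))
  exact ⟨rfl, 2 ^ k, by rwa [← pow_succ']⟩

end PrimePower

section MaximalAbelianNormal

variable {G : Type*} [Group G]

theorem exists_mem_forall_commutator_mem [Group.IsNilpotent G] {N H : Subgroup G} [H.Normal]
    (hHN : ¬ H ≤ N) : ∃ x ∈ H, x ∉ N ∧ ∀ g, x * g * x⁻¹ * g⁻¹ ∈ N := by
  classical
  have hex : ∃ k, ∃ x ∈ Subgroup.upperCentralSeries G k, x ∈ H ∧ x ∉ N := by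
    obtain ⟨n, hn⟩ := Group.IsNilpotent.nilpotent G
    obtain ⟨x, hxH, hxN⟩ := SetLike.not_le_iff_exists.1 hHN
    exact ⟨n, x, hn ▸ Subgroup.mem_top x, hxH, hxN⟩
  obtain ⟨x, hxk, hxH, hxN⟩ := Nat.find_spec hex
  cases hk : Nat.find hex with
  | zero =>
    rw [hk, Subgroup.upperCentralSeries_zero, Subgroup.mem_bot] at hxk
    exact absurd (hxk ▸ N.one_mem) hxN
  | succ k =>
    rw [hk] at hxk
    refine ⟨x, hxH, hxN, fun g => by_contra fun hg => ?_⟩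
    refine Nat.find_min hex (m := k) (by omega)
      ⟨x * g * x⁻¹ * g⁻¹, Subgroup.mem_upperCentralSeries_succ_iff.1 hxk g, ?_, hg⟩
    have hconj : g * x⁻¹ * g⁻¹ ∈ H := ‹H.Normal›.conj_mem _ (H.inv_mem hxH) g
    simpa only [mul_assoc] using H.mul_mem hxH hconj

theorem normal_closure_insert {A : Subgroup G} [A.Normal] {x : G}
    (hx : ∀ g, x * g * x⁻¹ * g⁻¹ ∈ A) : (Subgroup.closure (insert x (A : Set G))).Normal := by
  have hA : A ≤ Subgroup.closure (insert x (A : Set G)) := fun y hy =>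
    Subgroup.subset_closure (Set.mem_insert_of_mem x hy)
  refine ⟨fun n hn g => ?_⟩
  induction hn using Subgroup.closure_induction with
  | mem y hy =>
    rcases hy with rfl | hy
    · have h := Subgroup.mul_mem _ (Subgroup.inv_mem _ (hA (hx g)))
        (Subgroup.subset_closure (Set.mem_insert y _))
      convert h using 1
      group
    · exact hA (‹A.Normal›.conj_mem y hy g)
  | one => simp
  | mul a b _ _ ha hb =>
    rw [← conj_mul]
    exact Subgroup.mul_mem _ ha hb
  | inv a _ ha =>
    rw [← conj_inv]
    exact Subgroup.inv_mem _ ha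

theorem exists_normal_centralizer_eq_self [Finite G] [Group.IsNilpotent G] :
    ∃ A : Subgroup G, A.Normal ∧ Subgroup.centralizer (A : Set G) = A := by
  obtain ⟨A, ⟨hAn, hAc⟩, hmax⟩ := Set.Finite.exists_maximal
    (Set.toFinite {A : Subgroup G | A.Normal ∧ A ≤ Subgroup.centralizer (A : Set G)})
    ⟨⊥, inferInstance, bot_le⟩
  refine ⟨A, hAn, le_antisymm (by_contra fun hle => ?_) hAc⟩
  obtain ⟨x, hxC, hxA, hx⟩ := exists_mem_forall_commutator_mem hle
  rw [Subgroup.mem_centralizer_iff] at hxC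
  have hcomm : IsMulCommutative (Subgroup.closure (insert x (A : Set G))) := by
    refine Subgroup.isMulCommutative_closure ?_
    rintro y (rfl | hy) w (rfl | hw)
    · rfl
    · exact (hxC w hw).symm
    · exact hxC y hy
    · exact Subgroup.mem_centralizer_iff.1 (hAc hw) y hy
  exact hxA (hmax ⟨normal_closure_insert hx, Subgroup.le_centralizer_iff_isMulCommutative.2 hcomm⟩
    (fun y hy => Subgroup.subset_closure (Set.mem_insert_of_mem x hy))
    (Subgroup.subset_closure (Set.mem_insert x _)))

end MaximalAbelianNormal

section PGroup

variable {G : Type*} [Group G] {p : ℕ}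

theorem exists_pow_notMem_pow_succ_mem (hG : IsPGroup p G) {H : Subgroup G} {c : G} (hc : c ∉ H) :
    ∃ j, c ^ p ^ j ∉ H ∧ c ^ p ^ (j + 1) ∈ H := by
  by_contra! h
  obtain ⟨n, hn⟩ := hG c
  have hpow : ∀ j, c ^ p ^ j ∉ H := fun j => by
    induction j with
    | zero => rwa [pow_zero, pow_one]
    | succ j ih => exact h j ih
  exact hpow n (hn ▸ H.one_mem)

theorem mul_self_le_card_closure_pair [Finite G] [Fact p.Prime] (hG : IsPGroup p G) {x y : G}
    (hx : orderOf x = p) (hy : y ∉ Subgroup.zpowers x) :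
    p * p ≤ Nat.card (Subgroup.closure {x, y}) := by
  have hp : p.Prime := Fact.out
  have hlt : Subgroup.zpowers x < Subgroup.closure {x, y} := by
    refine lt_of_le_of_ne (Subgroup.zpowers_le.2 (Subgroup.subset_closure (by simp))) fun h => ?_
    exact hy (h ▸ Subgroup.subset_closure (by simp))
  obtain ⟨k, hk⟩ := IsPGroup.iff_card.1 (hG.to_subgroup (Subgroup.closure {x, y}))
  have hcard : p ^ 1 < p ^ k := by
    rw [pow_one, ← hk, ← hx, ← Nat.card_zpowers]
    exact Set.Finite.card_lt_card (Set.toFinite _) hlt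
  rw [hk, ← sq]
  exact Nat.pow_le_pow_right hp.pos ((Nat.pow_lt_pow_iff_right hp.one_lt).1 hcard)

theorem exists_orderOf_pow_eq [Finite G] [Fact p.Prime] (hG : IsPGroup p G) {a : G} (ha : a ≠ 1) :
    ∃ n : ℕ, orderOf (a ^ n) = p := by
  have hp : p.Prime := Fact.out
  obtain ⟨k, hk⟩ := IsPGroup.iff_orderOf.1 hG a
  obtain ⟨k, rfl⟩ := Nat.exists_eq_succ_of_ne_zero (n := k) (by
    rintro rfl
    exact ha (orderOf_eq_one_iff.1 (by rw [hk, pow_zero])))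
  refine ⟨p ^ k, ?_⟩
  rw [orderOf_pow_of_dvd (pow_ne_zero k hp.ne_zero) (hk ▸ pow_dvd_pow p k.le_succ), hk, pow_succ,
    Nat.mul_div_cancel_left p (pow_pos hp.pos k)]

end PGroup

section UniqueSubgroup

variable {G : Type*} [Group G] [Finite G] {p : ℕ} [Fact p.Prime]

theorem mem_zpowers_of_not_isElementaryPair (hG : IsPGroup p G)
    (h : ¬ ∃ x y : G, IsElementaryPair p x y) {x y : G} (hx : orderOf x = p) (hy : y ^ p = 1) :
    y ∈ Subgroup.zpowers x := by
  have : Nontrivial G := ⟨x, 1, fun hx1 => (Fact.out : p.Prime).one_lt.ne' <| by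
    rw [← hx, hx1, orderOf_one]⟩
  obtain ⟨n, hn, hcard⟩ := (hG.to_subgroup (Subgroup.center G)).nontrivial_iff_card.1
    hG.center_nontrivial
  obtain ⟨⟨z, hzc⟩, hz⟩ := exists_prime_orderOf_dvd_card' p (hcard ▸ dvd_pow_self p hn.ne')
  rw [Subgroup.orderOf_mk] at hz
  have hmem : ∀ w : G, w ^ p = 1 → w ∈ Subgroup.zpowers z := fun w hw => by
    by_contra hwz
    exact h ⟨z, w, hz ▸ pow_orderOf_eq_one z, hw, (Subgroup.mem_center_iff.1 hzc w).symm,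
      mul_self_le_card_closure_pair hG hz hwz⟩
  have hxz : Subgroup.zpowers x = Subgroup.zpowers z :=
    Subgroup.eq_of_le_of_card_ge
      (Subgroup.zpowers_le.2 (hmem x (hx ▸ pow_orderOf_eq_one x)))
      (by rw [Nat.card_zpowers, Nat.card_zpowers, hx, hz])
  exact hxz ▸ hmem y hy

theorem mem_zpowers_of_pow_eq_one (hG : IsPGroup p G)
    (huniq : ∀ x y : G, orderOf x = p → y ^ p = 1 → y ∈ Subgroup.zpowers x) {a x : G}
    (ha : a ≠ 1) (hx : x ^ p = 1) : x ∈ Subgroup.zpowers a := by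
  obtain ⟨n, hn⟩ := exists_orderOf_pow_eq hG ha
  exact Subgroup.zpowers_le.2 (Subgroup.npow_mem_zpowers a n) (huniq _ x hn hx)

end UniqueSubgroup

theorem isCyclic_of_unique_subgroup {A : Type*} [CommGroup A] [Finite A] {p : ℕ}
    [Fact p.Prime] (hA : IsPGroup p A)
    (huniq : ∀ x y : A, orderOf x = p → y ^ p = 1 → y ∈ Subgroup.zpowers x) : IsCyclic A := by
  have hp : p.Prime := Fact.out
  obtain ⟨g, hg⟩ := Monoid.exists_orderOf_eq_exponent (Monoid.ExponentExists.of_finite (G := A))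
  obtain ⟨k, hk⟩ := IsPGroup.iff_orderOf.1 hA g
  have hpow : ∀ x : A, x ^ p ^ k = 1 := fun x => by
    rw [← hk, hg, Monoid.pow_exponent_eq_one]
  refine ⟨g, fun c => by_contra fun (hc : c ∉ Subgroup.zpowers g) => ?_⟩
  obtain ⟨j, hj, hj'⟩ := exists_pow_notMem_pow_succ_mem hA hc
  obtain ⟨s, hs⟩ := Subgroup.mem_zpowers_iff.1 hj'
  have hg1 : g ≠ 1 := by
    rintro rfl
    rw [orderOf_one] at hk
    exact hj (by rw [← pow_one (c ^ p ^ j), hk, hpow]; exact one_mem _)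
  obtain ⟨k, rfl⟩ := Nat.exists_eq_succ_of_ne_zero (n := k) (by
    rintro rfl
    exact hg1 (orderOf_eq_one_iff.1 (by rw [hk, pow_zero])))
  have hdvd : (orderOf g : ℤ) ∣ s * p ^ k := by
    refine orderOf_dvd_iff_zpow_eq_one.2 ?_
    calc g ^ (s * p ^ k) = (c ^ p ^ j) ^ p ^ (k + 1) := by
          rw [zpow_mul, hs, ← Nat.cast_pow, zpow_natCast, ← pow_mul, ← pow_mul]
          ring_nf
      _ = 1 := hpow _
  obtain ⟨s', rfl⟩ : (p : ℤ) ∣ s := by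
    rw [hk, Nat.cast_pow, pow_succ'] at hdvd
    exact Int.dvd_of_mul_dvd_mul_right (pow_ne_zero k (Nat.cast_ne_zero.2 hp.ne_zero)) hdvd
  refine hj (mem_zpowers_of_sum_pow (t := 1) (n := 1) hk
    (fun x hx => mem_zpowers_of_pow_eq_one hA huniq hg1 hx) ?_ (s := s') ?_ ?_ isCoprime_one_right)
  · rw [mul_comm, inv_mul_cancel_left, zpow_one]
  · rw [hs, pow_succ, pow_mul]
  · simp

section Inversion

variable {G : Type*} [Group G] {p : ℕ}

theorem conj_eq_inv_of_notMem_zpowers {a : G} [(Subgroup.zpowers a).Normal] (hG : IsPGroup p G)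
    (ha : 4 ∣ orderOf a)
    (h : ∀ b ∉ Subgroup.zpowers a, b ^ p ∈ Subgroup.zpowers a → p = 2 ∧ b * a * b⁻¹ = a⁻¹) {d : G}
    (hd : d ∉ Subgroup.zpowers a) : d * a * d⁻¹ = a⁻¹ := by
  obtain ⟨j, hj, hj'⟩ := exists_pow_notMem_pow_succ_mem hG hd
  rw [pow_succ, pow_mul] at hj'
  obtain ⟨rfl, hinv⟩ := h _ hj hj'
  cases j with
  | zero => simpa only [pow_zero, pow_one] using hinv
  | succ j =>
    obtain ⟨t, ht⟩ := Subgroup.mem_zpowers_iff.1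
      (‹(Subgroup.zpowers a).Normal›.conj_mem a (Subgroup.mem_zpowers a) (d ^ 2 ^ j))
    rw [pow_succ, pow_mul] at hinv
    exact absurd hinv (sq_conj_ne_inv ha ht.symm)

theorem closure_pair_eq_top_of_conj_eq_inv {a b : G}
    (hcent : ∀ c, c * a * c⁻¹ = a → c ∈ Subgroup.zpowers a)
    (hinv : ∀ d ∉ Subgroup.zpowers a, d * a * d⁻¹ = a⁻¹) (hb : b ∉ Subgroup.zpowers a) :
    Subgroup.closure {a, b} = ⊤ := by
  have ha : Subgroup.zpowers a ≤ Subgroup.closure {a, b} :=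
    Subgroup.zpowers_le.2 (Subgroup.subset_closure (by simp))
  refine (Subgroup.eq_top_iff' _).2 fun d => ?_
  by_cases hd : d ∈ Subgroup.zpowers a
  · exact ha hd
  · have hdb : d * b ∈ Subgroup.zpowers a := hcent _ <| by
      calc d * b * a * (d * b)⁻¹ = d * (b * a * b⁻¹) * d⁻¹ := by group
        _ = (d * a * d⁻¹)⁻¹ := by rw [hinv b hb, conj_inv]
        _ = a := by rw [hinv d hd, inv_inv]
    exact (Subgroup.mul_mem_cancel_right _ (Subgroup.subset_closure (by simp))).1 (ha hdb)

end Inversion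

section Classification

variable {G : Type*} [Group G] [Finite G] {p : ℕ} [Fact p.Prime]

open scoped IsMulCommutative in
theorem exists_zpowers_normal_centralizer_eq_self (hG : IsPGroup p G)
    (huniq : ∀ x y : G, orderOf x = p → y ^ p = 1 → y ∈ Subgroup.zpowers x) :
    ∃ a : G, (Subgroup.zpowers a).Normal ∧ ∀ b, b * a * b⁻¹ = a → b ∈ Subgroup.zpowers a := by
  have := hG.isNilpotent
  obtain ⟨A, hAn, hA⟩ := exists_normal_centralizer_eq_self (G := G)
  have hcomm : IsMulCommutative A := Subgroup.le_centralizer_iff_isMulCommutative.1 hA.ge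
  have hcyc : IsCyclic A := isCyclic_of_unique_subgroup (p := p) (hG.to_subgroup A)
      fun x y hx hy => by
    have h := huniq x y (by rwa [Subgroup.orderOf_coe]) (by exact_mod_cast congrArg Subtype.val hy)
    obtain ⟨n, hn⟩ := Subgroup.mem_zpowers_iff.1 h
    exact Subgroup.mem_zpowers_iff.2 ⟨n, Subtype.ext (by simpa using hn)⟩
  obtain ⟨a, rfl⟩ := (Subgroup.isCyclic_iff_exists_zpowers_eq_top A).1 hcyc
  refine ⟨a, hAn, fun b hb => ?_⟩
  rw [← hA, Subgroup.mem_centralizer_iff]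
  rintro _ ⟨n, rfl⟩
  have hba : Commute a b := (mul_inv_eq_iff_eq_mul.1 hb).symm
  exact (hba.zpow_left n).eq

-- Every element outside a self-centralizing normal subgroup `⟨a⟩` acts on it by inversion, so the
-- product of two such elements centralizes `⟨a⟩`, and `⟨a⟩` has index two.
theorem exists_isElementaryPair_or_isDicyclicPair (hG : IsPGroup p G) (hnc : ¬ IsCyclic G) :
    (∃ x y : G, IsElementaryPair p x y) ∨
      p = 2 ∧ ∃ (a b : G) (l : ℕ), IsDicyclicPair (2 * l) a b ∧ Subgroup.closure {a, b} = ⊤ := by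
  refine or_iff_not_imp_left.2 fun hpair => ?_
  have huniq : ∀ x y : G, orderOf x = p → y ^ p = 1 → y ∈ Subgroup.zpowers x :=
    fun _ _ => mem_zpowers_of_not_isElementaryPair hG hpair
  obtain ⟨a, hnormal, hcent⟩ := exists_zpowers_normal_centralizer_eq_self hG huniq
  obtain ⟨k, hk⟩ := IsPGroup.iff_orderOf.1 hG a
  have ha1 : a ≠ 1 := by
    rintro rfl
    exact hnc ⟨1, fun x => hcent x (by simp)⟩
  have hdic : ∀ b ∉ Subgroup.zpowers a, b ^ p ∈ Subgroup.zpowers a →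
      p = 2 ∧ ∃ l, IsDicyclicPair (2 * l) a b := fun b hb hbp => by
    obtain ⟨t, ht⟩ := Subgroup.mem_zpowers_iff.1
      (hnormal.conj_mem a (Subgroup.mem_zpowers a) b)
    exact exists_isDicyclicPair_of_pow_mem_zpowers Fact.out hk
      (fun x hx => mem_zpowers_of_pow_eq_one hG huniq ha1 hx) hb hbp ht.symm
      fun h => hb (hcent b h)
  obtain ⟨c, hc⟩ : ∃ c, c ∉ Subgroup.zpowers a := by
    by_contra! hall
    exact hnc ⟨a, hall⟩
  obtain ⟨j, hj, hj'⟩ := exists_pow_notMem_pow_succ_mem hG hc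
  obtain ⟨rfl, l, hl⟩ := hdic _ hj (by rwa [← pow_mul, ← pow_succ])
  have hinv : ∀ d ∉ Subgroup.zpowers a, d * a * d⁻¹ = a⁻¹ := fun d =>
    conj_eq_inv_of_notMem_zpowers hG ⟨l, by rw [hl.orderOf_eq]; ring⟩ fun b hb hbp =>
      (hdic b hb hbp).imp_right fun ⟨_, h⟩ => h.conj_eq
  exact ⟨rfl, a, _, l, hl, closure_pair_eq_top_of_conj_eq_inv hcent hinv hj⟩

end Classification

/-! ### Nilpotent groups -/

theorem div_add_sub_one_le {N p r : ℕ} (hp : p.Prime) (hr : r.Prime) (hpr : p ≤ r) (hpN : p ∣ N)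
    (hrN : r * r ∣ N) (hN : N ≠ 0) : N / r + r - 1 ≤ N / p + p - 1 := by
  rcases hpr.eq_or_lt with rfl | hlt
  · exact le_rfl
  have hco : Nat.Coprime p r := (Nat.coprime_primes hp hr).2 hlt.ne
  obtain ⟨n, rfl⟩ := (hco.mul_right hco).mul_dvd_of_dvd_of_dvd hpN hrN
  have hrn : 1 ≤ r * n := Nat.mul_pos hr.pos (Nat.pos_of_ne_zero (right_ne_zero_of_mul hN))
  have hdivr : p * (r * r) * n / r = p * (r * n) := by
    rw [show p * (r * r) * n = r * (p * (r * n)) by ring, Nat.mul_div_cancel_left _ hr.pos]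
  have hdivp : p * (r * r) * n / p = r * (r * n) := by
    rw [show p * (r * r) * n = p * (r * (r * n)) by ring, Nat.mul_div_cancel_left _ hp.pos]
  rw [hdivr, hdivp]
  have hle : p * (r * n) + r ≤ r * (r * n) + p := by nlinarith
  omega

section Subgroup

variable {G : Type*} [Group G] {H : Subgroup G}

theorem closure_coe_pair (x y : H) :
    Subgroup.closure {(x : G), (y : G)} = (Subgroup.closure {x, y}).map H.subtype := by
  rw [MonoidHom.map_closure, Set.image_pair]
  rfl

theorem IsElementaryPair.coe {p : ℕ} {x y : H} (h : IsElementaryPair p x y) :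
    IsElementaryPair p (x : G) (y : G) where
  pow_left := by simpa using congrArg Subtype.val h.pow_left
  pow_right := by simpa using congrArg Subtype.val h.pow_right
  commute := h.commute.map H.subtype
  le_card := by
    rw [closure_coe_pair, Subgroup.card_map_of_injective H.subtype_injective]
    exact h.le_card

theorem IsElementaryPair.mul_self_dvd_card [Finite G] {p : ℕ} [Fact p.Prime] (hG : IsPGroup p G)
    {x y : G} (h : IsElementaryPair p x y) : p * p ∣ Nat.card G := by
  have hp : p.Prime := Fact.out
  obtain ⟨k, hk⟩ := IsPGroup.iff_card.1 hG
  have hle : p ^ 2 ≤ p ^ k := by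
    rw [sq, ← hk]
    exact h.le_card.trans (Subgroup.card_le_card_group _)
  rw [hk, ← sq]
  exact pow_dvd_pow p ((Nat.pow_le_pow_iff_right hp.one_lt).1 hle)

theorem IsDicyclicPair.coe {n : ℕ} {a b : H} (h : IsDicyclicPair n a b) :
    IsDicyclicPair n (a : G) (b : G) where
  orderOf_eq := by rw [Subgroup.orderOf_coe, h.orderOf_eq]
  sq_eq := by simpa using congrArg Subtype.val h.sq_eq
  conj_eq := by simpa using congrArg Subtype.val h.conj_eq

theorem card_mul_orderOf_le_card [Finite G] {K : Subgroup G} {z : G} (hHK : H ≤ K) (hz : z ∈ K)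
    (hco : (Nat.card H).Coprime (orderOf z)) : Nat.card H * orderOf z ≤ Nat.card K :=
  Nat.le_of_dvd Nat.card_pos <| hco.mul_dvd_of_dvd_of_dvd (Subgroup.card_dvd_of_le hHK) <| by
    rw [← Nat.card_zpowers]
    exact Subgroup.card_dvd_of_le (Subgroup.zpowers_le.2 hz)

theorem eight_le_card_closure_pair [Finite G] {i j : G} (hi : orderOf i = 4)
    (hij : i * j = j * i⁻¹) : 8 ≤ Nat.card (Subgroup.closure {i, j}) := by
  have hle : Subgroup.zpowers i ≤ Subgroup.closure {i, j} :=
    Subgroup.zpowers_le.2 (Subgroup.subset_closure (by simp))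
  have hne : Nat.card (Subgroup.closure {i, j}) ≠ 4 := by
    intro hcard
    have heq := Subgroup.eq_of_le_of_card_ge hle (by rw [hcard, Nat.card_zpowers, hi])
    obtain ⟨n, rfl⟩ : j ∈ Subgroup.zpowers i := heq ▸ Subgroup.subset_closure (by simp)
    have hinv : i = i⁻¹ := mul_left_cancel ((Commute.zpow_self i n).eq.trans hij)
    have h2 : orderOf i ∣ 2 := orderOf_dvd_of_pow_eq_one (by
      rw [sq]
      exact mul_eq_one_iff_eq_inv.2 hinv)
    rw [hi] at h2
    omega
  have hdvd := Subgroup.card_dvd_of_le hle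
  rw [Nat.card_zpowers, hi] at hdvd
  have := Nat.card_pos (α := Subgroup.closure {i, j})
  omega

end Subgroup

section Dicyclic

theorem IsDicyclicPair.two_dvd_card {G : Type*} [Group G] {n : ℕ} {a b : G}
    (h : IsDicyclicPair n a b) : 2 ∣ Nat.card G :=
  (Dvd.intro n h.orderOf_eq.symm).trans (orderOf_dvd_natCard a)

variable {G : Type*} [Group G] [Finite G] {l : ℕ} {a b z : G}

theorem IsDicyclicPair.pos {n : ℕ} (h : IsDicyclicPair n a b) : 0 < n := by
  have := orderOf_pos a
  rw [h.orderOf_eq] at this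
  omega

theorem IsDicyclicPair.orderOf_pow (h : IsDicyclicPair (2 * l) a b) : orderOf (a ^ l) = 4 := by
  have hl : 0 < l := pos_of_mul_pos_right h.pos (Nat.zero_le 2)
  have horder : orderOf a = 4 * l := h.orderOf_eq.trans (by ring)
  rw [orderOf_pow_of_dvd hl.ne' (horder ▸ dvd_mul_left l 4), horder, Nat.mul_div_cancel _ hl]

theorem IsDicyclicPair.isQuaternionTriple (h : IsDicyclicPair (2 * l) a b) (hza : Commute z a)
    (hzb : Commute z b) : IsQuaternionTriple (orderOf z) (a ^ l) b z where
  pow_four := h.orderOf_pow ▸ pow_orderOf_eq_one _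
  sq_eq_sq := by rw [h.sq_eq, ← pow_mul, mul_comm]
  mul_eq_mul_inv := by
    have hconj : b * a ^ l * b⁻¹ = (a ^ l)⁻¹ := by rw [← conj_pow, h.conj_eq, inv_pow]
    rw [← hconj]
    have hb2 : b ^ 2 * a ^ l = a ^ l * b ^ 2 := by rw [h.sq_eq, ← pow_add, ← pow_add, add_comm]
    rw [← mul_assoc, ← mul_assoc, ← sq, hb2]
    group
  commute_left := hza.pow_right l
  commute_right := hzb
  pow_eq_one := pow_orderOf_eq_one z

theorem IsDicyclicPair.eight_mul_le_card {P : Subgroup G} (hP : IsPGroup 2 P) {a b : P}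
    (h : IsDicyclicPair (2 * l) a b) (hz : Odd (orderOf z)) :
    8 * orderOf z ≤ Nat.card (Subgroup.closure {(a : G) ^ l, (b : G), z}) := by
  have : Fact (Nat.Prime 2) := ⟨Nat.prime_two⟩
  have hle : Subgroup.closure {(a : G) ^ l, (b : G)} ≤ Subgroup.closure {(a : G) ^ l, (b : G), z} :=
    Subgroup.closure_mono (Set.insert_subset_insert (by simp))
  have hleP : Subgroup.closure {(a : G) ^ l, (b : G)} ≤ P := by
    rw [Subgroup.closure_le, Set.pair_subset_iff]
    exact ⟨P.pow_mem a.2 l, b.2⟩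
  obtain ⟨k, hk⟩ := IsPGroup.iff_card.1 (hP.to_le hleP)
  have h8 := eight_le_card_closure_pair h.coe.orderOf_pow
    (h.coe.isQuaternionTriple (Commute.one_left _) (Commute.one_left _)).mul_eq_mul_inv
  exact (Nat.mul_le_mul_right _ h8).trans (card_mul_orderOf_le_card hle
    (Subgroup.subset_closure (by simp)) (hk ▸ (Nat.coprime_two_left.2 hz).pow_left k))

end Dicyclic

section Nilpotent

variable {G : Type*} [Group G]

theorem exists_isElementaryPair_or_isDicyclicPair_of_isNilpotent [Finite G] [Group.IsNilpotent G]
    (hnc : ¬ IsCyclic G) :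
    (∃ r : ℕ, r.Prime ∧ r * r ∣ Nat.card G ∧ ∃ x y : G, IsElementaryPair r x y) ∨
      ∃ (P : Sylow 2 G) (a b : P) (l : ℕ),
        IsDicyclicPair (2 * l) a b ∧ Subgroup.closure {a, b} = ⊤ := by
  have hZ : ¬ IsZGroup G := fun h => hnc inferInstance
  rw [isZGroup_iff] at hZ
  push Not at hZ
  obtain ⟨r, hr, P, hP⟩ := hZ
  have : Fact r.Prime := ⟨hr⟩
  rcases exists_isElementaryPair_or_isDicyclicPair P.isPGroup' hP with ⟨x, y, h⟩ | ⟨rfl, h⟩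
  · exact .inl ⟨r, hr, (h.mul_self_dvd_card P.isPGroup').trans (Subgroup.card_subgroup_dvd_card _),
      x, y, h.coe⟩
  · exact .inr ⟨P, h⟩

theorem exists_commute_sylow_two [Finite G] [Group.IsNilpotent G] {P : Sylow 2 G}
    (hP : (P : Subgroup G) ≠ ⊤) :
    ∃ z : G, Odd (orderOf z) ∧ 3 ≤ orderOf z ∧ ∀ x : P, Commute z x := by
  have : Fact (Nat.Prime 2) := ⟨Nat.prime_two⟩
  obtain ⟨q, hq, hqP⟩ := Nat.exists_prime_and_dvd (n := (P : Subgroup G).index)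
    (by rwa [Ne, Subgroup.index_eq_one])
  have : Fact q.Prime := ⟨hq⟩
  have hq2 : q ≠ 2 := by
    rintro rfl
    exact P.not_dvd_index hqP
  obtain ⟨z, hz⟩ := exists_prime_orderOf_dvd_card' q (hqP.trans (Subgroup.index_dvd_card _))
  have hzq : IsPGroup q (Subgroup.zpowers z) :=
    IsPGroup.of_card (n := 1) (by rw [Nat.card_zpowers, hz, pow_one])
  obtain ⟨Q, hQ⟩ := hzq.exists_le_sylow
  refine ⟨z, hz ▸ hq.odd_of_ne_two hq2, ?_, fun x => ?_⟩
  · rw [hz]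
    exact lt_of_le_of_ne hq.two_le hq2.symm
  · exact Subgroup.commute_of_normal_of_disjoint (Q : Subgroup G) P inferInstance inferInstance
      (IsPGroup.disjoint_of_ne q 2 hq2 _ _ Q.isPGroup' P.isPGroup') z x
      (hQ (Subgroup.mem_zpowers z)) x.2

theorem isDicyclic_of_sylow_eq_top [Finite G] {P : Subgroup G} (hP : P = ⊤) {a b : P} {l : ℕ}
    (h : IsDicyclicPair (2 * l) a b) (hab : Subgroup.closure {a, b} = ⊤) : IsDicyclic G := by
  refine ⟨a, b, 2 * l, ?_, h.coe.orderOf_eq, h.coe.sq_eq, h.coe.conj_eq, ?_⟩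
  · have := h.pos
    omega
  · rw [closure_coe_pair, hab, ← MonoidHom.range_eq_map, Subgroup.range_subtype, hP]

end Nilpotent

section NilpotentInvariants

theorem adjoinInvariantsLe_mono {G : Type*} [Group G] {σ F : Type*} [Field F]
    {A : G →* (MvPolynomial σ F →ₐ[F] MvPolynomial σ F)} {s t : ℕ} (h : s ≤ t) :
    adjoinInvariantsLe A s ≤ adjoinInvariantsLe A t :=
  Algebra.adjoin_mono fun _ hu => ⟨hu.1, hu.2.trans h⟩

variable {G : Type*} [Group G] [Fintype G] {σ F : Type*} [Field F]
  {A : G →* (MvPolynomial σ F →ₐ[F] MvPolynomial σ F)}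

theorem IsDicyclicPair.invariants_le {P : Subgroup G} (hP : IsPGroup 2 P) {a b : P} {l : ℕ}
    (h : IsDicyclicPair (2 * l) a b) {z : G} (hz : Odd (orderOf z)) (hzP : ∀ x : P, Commute z x)
    (hA : IsLinearAction A) (hF : (Fintype.card G : F) ≠ 0) {s : ℕ}
    (hs : Fintype.card G / 2 + 2 ≤ s ∨ Fintype.card G / 2 + 1 ≤ s ∧ 3 ≤ orderOf z) :
    invariants A ≤ adjoinInvariantsLe A s :=
  (h.coe.isQuaternionTriple (hzP a) (hzP b)).invariants_le (h.eight_mul_le_card hP hz)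
    (Nat.card_eq_fintype_card (α := G) ▸ h.coe.two_dvd_card) orderOf_dvd_card hA hF hs

theorem IsElementaryPair.invariants_le_of_isLeast {p r : ℕ} (hp : p.Prime)
    (hpdvd : p ∣ Fintype.card G) (hmin : ∀ q : ℕ, q.Prime → q ∣ Fintype.card G → p ≤ q)
    (hr : r.Prime) (hrr : r * r ∣ Fintype.card G) {x y : G} (h : IsElementaryPair r x y)
    (hA : IsLinearAction A) (hF : (Fintype.card G : F) ≠ 0) :
    invariants A ≤ adjoinInvariantsLe A (Fintype.card G / p + p - 1) := by
  have : Fact r.Prime := ⟨hr⟩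
  have hrG : r ∣ Fintype.card G := (dvd_mul_right r r).trans hrr
  exact (h.invariants_le hrG hA hF).trans (adjoinInvariantsLe_mono
    (div_add_sub_one_le hp hr (hmin r hr hrG) hpdvd hrr Fintype.card_ne_zero))

theorem invariants_le_of_not_isDicyclic [Group.IsNilpotent G] (hnc : ¬ IsCyclic G) {p : ℕ}
    (hp : p.Prime) (hpdvd : p ∣ Fintype.card G)
    (hmin : ∀ q : ℕ, q.Prime → q ∣ Fintype.card G → p ≤ q) (hdic : ¬ (p = 2 ∧ IsDicyclic G))
    (hA : IsLinearAction A) (hF : (Fintype.card G : F) ≠ 0) :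
    invariants A ≤ adjoinInvariantsLe A (Fintype.card G / p + p - 1) := by
  rcases exists_isElementaryPair_or_isDicyclicPair_of_isNilpotent hnc with
    ⟨r, hr, hrr, x, y, h⟩ | ⟨P, a, b, l, h, hab⟩
  · rw [Nat.card_eq_fintype_card] at hrr
    exact h.invariants_le_of_isLeast hp hpdvd hmin hr hrr hA hF
  · obtain rfl : p = 2 := le_antisymm
      (hmin 2 Nat.prime_two (Nat.card_eq_fintype_card (α := G) ▸ h.coe.two_dvd_card)) hp.two_le
    have hP : (P : Subgroup G) ≠ ⊤ := fun hP => hdic ⟨rfl, isDicyclic_of_sylow_eq_top hP h hab⟩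
    obtain ⟨z, hz, hz3, hzP⟩ := exists_commute_sylow_two hP
    exact h.invariants_le P.isPGroup' hz hzP hA hF (.inr ⟨le_rfl, hz3⟩)

theorem invariants_le_of_two_dvd_card [Group.IsNilpotent G] (hnc : ¬ IsCyclic G)
    (h2 : 2 ∣ Fintype.card G) (hA : IsLinearAction A) (hF : (Fintype.card G : F) ≠ 0) :
    invariants A ≤ adjoinInvariantsLe A (Fintype.card G / 2 + 2) := by
  rcases exists_isElementaryPair_or_isDicyclicPair_of_isNilpotent hnc with
    ⟨r, hr, hrr, x, y, h⟩ | ⟨P, a, b, l, h, -⟩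
  · rw [Nat.card_eq_fintype_card] at hrr
    exact (h.invariants_le_of_isLeast Nat.prime_two h2 (fun q hq _ => hq.two_le) hr hrr hA
      hF).trans (adjoinInvariantsLe_mono (by omega))
  · exact h.invariants_le P.isPGroup' (z := 1) (by simp) (fun _ => Commute.one_left _) hA hF
      (.inl le_rfl)

end NilpotentInvariants

/-! ### The lower bound for dicyclic groups -/

section Representation

variable {F : Type*} [Field F] {G : Type*} [Group G] {d : ℕ}
  (ρ : G →* Matrix.GeneralLinearGroup (Fin d) F)

/-- The action on the polynomial ring induced by a representation. The substitutions `polyAct ρ g`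
compose in the reversed order, whence the inverse. -/
noncomputable def act : G →* (MvPolynomial (Fin d) F →ₐ[F] MvPolynomial (Fin d) F) where
  toFun g := aeval fun i => ∑ j, (ρ g⁻¹).val i j • X j
  map_one' := algHom_ext fun i => by simp [Matrix.one_apply]
  map_mul' g h := algHom_ext fun i => by
    simp only [aeval_X, AlgHom.mul_apply, mul_inv_rev, map_mul, Units.val_mul, Matrix.mul_apply,
      map_sum, map_smul, Finset.sum_smul, Finset.smul_sum, smul_smul]
    rw [Finset.sum_comm]

theorem act_inv_apply (g : G) (f : MvPolynomial (Fin d) F) : act ρ g⁻¹ f = polyAct ρ g f := by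
  simp [act, polyAct]

theorem isLinearAction_act : IsLinearAction (act ρ) := fun g i => by
  simp only [act, MonoidHom.coe_mk, OneHom.coe_mk, aeval_X]
  exact (homogeneousSubmodule (Fin d) F 1).sum_smul_mem _ fun j _ => isHomogeneous_X F j

theorem mem_invariants_act {f : MvPolynomial (Fin d) F} :
    f ∈ invariants (act ρ) ↔ IsPolyInvariant ρ f := by
  rw [mem_invariants, (Equiv.inv G).forall_congr_left]
  simp [IsPolyInvariant, act_inv_apply]

theorem noetherBoundLe_iff {s : ℕ} :
    NoetherBoundLe ρ s ↔ invariants (act ρ) ≤ adjoinInvariantsLe (act ρ) s := by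
  simp only [NoetherBoundLe, adjoinInvariantsLe, SetLike.le_def, mem_invariants_act]

end Representation

section QuaternionGroup

variable {G H : Type*} [Group G] [Group H] {n : ℕ} {a b : G} {x y : H}

theorem zpow_mul_of_conj_eq_inv (hconj : y * x * y⁻¹ = x⁻¹) (k : ℤ) :
    x ^ k * y = y * x ^ (-k) := by
  have hsemi : SemiconjBy y x x⁻¹ := mul_inv_eq_iff_eq_mul.1 hconj
  simpa using (hsemi.zpow_right (-k)).eq.symm

theorem pow_two_mul_of_sq_eq (hsq : y ^ 2 = x ^ n) (hconj : y * x * y⁻¹ = x⁻¹) :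
    x ^ (2 * n) = 1 := by
  have hcomm : x ^ n * y = y * x ^ n := by rw [← hsq, ← pow_succ, pow_succ']
  have hinv := zpow_mul_of_conj_eq_inv hconj n
  rw [zpow_natCast, hcomm, zpow_neg, zpow_natCast] at hinv
  rw [two_mul, pow_add]
  exact mul_eq_one_iff_eq_inv.2 (mul_left_cancel hinv)

theorem exists_quaternionGroup_hom (hsq : y ^ 2 = x ^ n) (hconj : y * x * y⁻¹ = x⁻¹) :
    ∃ f : QuaternionGroup n →* H, ∀ k : ℤ, f (.a k) = x ^ k ∧ f (.xa k) = y * x ^ k := by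
  let α : ZMod (2 * n) →+ Additive H :=
    ZMod.lift (2 * n) ⟨zmultiplesHom (Additive H) (Additive.ofMul x), by
      rw [zmultiplesHom_apply, natCast_zsmul, ← ofMul_pow, pow_two_mul_of_sq_eq hsq hconj,
        ofMul_one]⟩
  let f : QuaternionGroup n → H
    | .a i => (α i).toMul
    | .xa i => y * (α i).toMul
  have ha (k : ℤ) : f (.a k) = x ^ k := by simp [f, α]
  have hxa (k : ℤ) : f (.xa k) = y * x ^ k := congrArg (y * ·) (ha k)
  refine ⟨MonoidHom.mk' f ?_, fun k => ⟨ha k, hxa k⟩⟩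
  rintro (i | i) (j | j) <;> obtain ⟨k, rfl⟩ := ZMod.intCast_surjective i <;>
    obtain ⟨l, rfl⟩ := ZMod.intCast_surjective j
  · rw [QuaternionGroup.a_mul_a, ← Int.cast_add, ha, ha, ha, zpow_add]
  · rw [QuaternionGroup.a_mul_xa, ← Int.cast_sub, hxa, ha, hxa, ← mul_assoc,
      zpow_mul_of_conj_eq_inv hconj, mul_assoc, ← zpow_add, neg_add_eq_sub]
  · rw [QuaternionGroup.xa_mul_a, ← Int.cast_add, hxa, hxa, ha, mul_assoc, zpow_add]
  · rw [QuaternionGroup.xa_mul_xa, ← Int.cast_natCast, ← Int.cast_add, ← Int.cast_sub, ha, hxa, hxa,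
      mul_assoc, ← mul_assoc (x ^ k), zpow_mul_of_conj_eq_inv hconj, mul_assoc y, ← mul_assoc y,
      ← sq, hsq, ← zpow_natCast, ← zpow_add, ← zpow_add]
    congr 1
    ring

theorem IsDicyclicPair.exists_quaternionGroup_mulEquiv (h : IsDicyclicPair n a b) (hn : n ≠ 1)
    (hab : Subgroup.closure {a, b} = ⊤) :
    ∃ φ : QuaternionGroup n ≃* G, φ (.a 1) = a ∧ φ (.xa 0) = b := by
  obtain ⟨f, hf⟩ := exists_quaternionGroup_hom h.sq_eq h.conj_eq
  have hfa : f (.a 1) = a := by simpa using (hf 1).1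
  have hfb : f (.xa 0) = b := by simpa using (hf 0).2
  have hinj : Function.Injective f := by
    refine (injective_iff_map_eq_one f).2 ?_
    rintro (i | i) hi <;> obtain ⟨k, rfl⟩ := ZMod.intCast_surjective i
    · rw [(hf k).1, ← orderOf_dvd_iff_zpow_eq_one, h.orderOf_eq] at hi
      rw [(ZMod.intCast_zmod_eq_zero_iff_dvd k (2 * n)).2 hi, QuaternionGroup.a_zero]
    · rw [(hf k).2] at hi
      have hinv : a = a⁻¹ := by
        rw [← h.conj_eq, eq_inv_of_mul_eq_one_left hi]
        group
      have h2 : orderOf a ∣ 2 :=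
        orderOf_dvd_of_pow_eq_one ((sq a).trans (mul_eq_one_iff_eq_inv.2 hinv))
      rw [h.orderOf_eq] at h2
      exact absurd (Nat.dvd_one.1 (Nat.dvd_of_mul_dvd_mul_left two_pos h2)) hn
  have hsurj : Function.Surjective f := by
    rw [← MonoidHom.range_eq_top, eq_top_iff, ← hab, Subgroup.closure_le, Set.pair_subset_iff]
    exact ⟨⟨_, hfa⟩, ⟨_, hfb⟩⟩
  exact ⟨MulEquiv.ofBijective f ⟨hinj, hsurj⟩, hfa, hfb⟩

theorem IsDicyclicPair.card_eq [Finite G] (h : IsDicyclicPair n a b) (hn : n ≠ 1)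
    (hab : Subgroup.closure {a, b} = ⊤) : Nat.card G = 4 * n := by
  obtain ⟨φ, -⟩ := h.exists_quaternionGroup_mulEquiv hn hab
  have : NeZero n := ⟨h.pos.ne'⟩
  rw [← Nat.card_congr φ.toEquiv, Nat.card_eq_fintype_card, QuaternionGroup.card]

theorem IsDicyclicPair.exists_hom (h : IsDicyclicPair n a b) (hn : n ≠ 1)
    (hab : Subgroup.closure {a, b} = ⊤) (hsq : y ^ 2 = x ^ n) (hconj : y * x * y⁻¹ = x⁻¹) :
    ∃ f : G →* H, f a = x ∧ f b = y := by
  obtain ⟨φ, hφa, hφb⟩ := h.exists_quaternionGroup_mulEquiv hn hab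
  obtain ⟨f, hf⟩ := exists_quaternionGroup_hom hsq hconj
  refine ⟨f.comp φ.symm.toMonoidHom, ?_, ?_⟩
  · simpa [← hφa] using (hf 1).1
  · simpa [← hφb] using (hf 0).2

end QuaternionGroup

section BinaryForms

theorem coeff_aeval_C_mul_X {σ R : Type*} [CommSemiring R] (c : σ → R) (P : MvPolynomial σ R)
    (m : σ →₀ ℕ) :
    coeff m (aeval (fun i => C (c i) * X i) P) = (m.prod fun i k => c i ^ k) * coeff m P := by
  classical
  induction P using MvPolynomial.induction_on' with
  | monomial u r =>
    have hu : aeval (fun i => C (c i) * X i) (monomial u r) =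
        C (u.prod fun i k => c i ^ k) * monomial u r := by
      rw [aeval_monomial, algebraMap_eq, monomial_eq]
      simp only [mul_pow, ← C_pow, Finsupp.prod, Finset.prod_mul_distrib, map_prod]
      ring
    rw [hu, coeff_C_mul, coeff_monomial]
    split_ifs with h
    · rw [h]
    · simp
  | add p q hp hq => rw [map_add, coeff_add, coeff_add, hp, hq, mul_add]

theorem eq_or_even_of_dvd_sub {n k l : ℕ} (hdvd : ((2 * n : ℕ) : ℤ) ∣ k - l)
    (hle : k + l ≤ 2 * n + 1) : k = l ∨ Even l := by
  rcases Nat.eq_zero_or_pos l with rfl | hl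
  · exact .inr (by simp)
  rcases Nat.eq_zero_or_pos k with rfl | hk
  · rw [Nat.cast_zero, zero_sub, dvd_neg, Int.natCast_dvd_natCast] at hdvd
    exact .inr (even_iff_two_dvd.2 ((Dvd.intro n rfl).trans hdvd))
  · have habs : |(k : ℤ) - l| < (2 * n : ℕ) := by
      rw [abs_lt]
      omega
    have := Int.eq_zero_of_abs_lt_dvd hdvd habs
    exact .inl (by omega)

variable {K : Type*} [Field K] {n : ℕ} {ζ : K} {G : Type*} [Group G]
  {ρ : G →* Matrix.GeneralLinearGroup (Fin 2) K} {a b : G}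

variable (K) in
/-- The exchange of the two variables of a binary form. -/
noncomputable def swapVars : MvPolynomial (Fin 2) K →ₐ[K] MvPolynomial (Fin 2) K :=
  rename (Equiv.swap 0 1)

theorem coeff_swapVars (P : MvPolynomial (Fin 2) K) (m : Fin 2 →₀ ℕ) :
    coeff (m.mapDomain (Equiv.swap 0 1)) (swapVars K P) = coeff m P :=
  coeff_rename_mapDomain _ (Equiv.injective _) _ _

theorem swapVars_eq_self (hn : 0 < n) (hζ : IsPrimitiveRoot ζ (2 * n))
    {P : MvPolynomial (Fin 2) K} (hP : P.totalDegree ≤ 2 * n + 1)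
    (ha : aeval (fun i => C (![ζ, ζ⁻¹] i) * X i) P = P)
    (hb : swapVars K (aeval (fun i => C (![1, -1] i) * X i) P) = P) : swapVars K P = P := by
  ext m'
  obtain ⟨m, rfl⟩ := Finsupp.mapDomain_surjective (Equiv.swap (0 : Fin 2) 1).surjective m'
  have hswap : coeff (m.mapDomain (Equiv.swap 0 1)) P = (-1) ^ m 1 * coeff m P := by
    conv_lhs => rw [← hb]
    rw [coeff_swapVars, coeff_aeval_C_mul_X]
    simp [Finsupp.prod_fintype]
  rw [coeff_swapVars, hswap]
  rcases eq_or_ne (coeff m P) 0 with h0 | h0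
  · simp [h0]
  have hpow : ζ ^ ((m 0 : ℤ) - m 1) = 1 := by
    have hcoeff := coeff_aeval_C_mul_X ![ζ, ζ⁻¹] P m
    rw [ha, eq_comm, mul_eq_right₀ h0] at hcoeff
    rw [zpow_sub₀ (hζ.ne_zero (by omega)), ← hcoeff]
    simp [Finsupp.prod_fintype, div_eq_mul_inv]
  have hdeg : m 0 + m 1 ≤ 2 * n + 1 := by
    simpa [Finsupp.sum_fintype] using (le_totalDegree (mem_support_iff.2 h0)).trans hP
  rcases eq_or_even_of_dvd_sub ((hζ.zpow_eq_one_iff_dvd _).1 hpow) hdeg with heq | heven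
  · have hm : m.mapDomain (Equiv.swap 0 1) = m := by
      ext i
      rw [Finsupp.mapDomain_equiv_apply]
      fin_cases i <;> simp [heq]
    rw [← hswap, hm]
  · rw [heven.neg_one_pow, one_mul]

theorem polyAct_of_val_eq_diagonal {c : Fin 2 → K} (ha : (ρ a).val = Matrix.diagonal c)
    (P : MvPolynomial (Fin 2) K) : polyAct ρ a P = aeval (fun i => C (c i) * X i) P := by
  simp [polyAct, ha, Matrix.diagonal_apply, smul_eq_C_mul]

theorem polyAct_of_val_eq_antidiagonal (hb : (ρ b).val = !![0, 1; -1, 0])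
    (P : MvPolynomial (Fin 2) K) :
    polyAct ρ b P = swapVars K (aeval (fun i => C (![1, -1] i) * X i) P) := by
  have hcomp : (aeval fun i => ∑ j, (ρ b).val i j • X j : MvPolynomial (Fin 2) K →ₐ[K] _) =
      (swapVars K).comp (aeval fun i => C (![1, -1] i) * X i) := algHom_ext fun i => by
    fin_cases i <;> simp [hb, swapVars]
  exact DFunLike.congr_fun hcomp P

theorem adjoinInvariantsLe_le_equalizer_swapVars (hn : 0 < n) (hζ : IsPrimitiveRoot ζ (2 * n))
    (ha : (ρ a).val = Matrix.diagonal ![ζ, ζ⁻¹]) (hb : (ρ b).val = !![0, 1; -1, 0]) :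
    adjoinInvariantsLe (act ρ) (2 * n + 1) ≤ AlgHom.equalizer (swapVars K) (AlgHom.id K _) := by
  refine Algebra.adjoin_le fun P hP => ?_
  have hinv := (mem_invariants_act ρ).1 hP.1
  exact swapVars_eq_self hn hζ hP.2 (polyAct_of_val_eq_diagonal ha P ▸ hinv a)
    (polyAct_of_val_eq_antidiagonal hb P ▸ hinv b)

theorem mem_invariants_act_of_closure_eq_top (hab : Subgroup.closure {a, b} = ⊤)
    {P : MvPolynomial (Fin 2) K} (ha : polyAct ρ a P = P) (hb : polyAct ρ b P = P) :
    P ∈ invariants (act ρ) := by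
  rw [← Subgroup.closure_inv, Set.inv_insert, Set.inv_singleton] at hab
  refine mem_invariants_of_closure_eq_top _ hab ?_
  rintro g (rfl | rfl) <;> rwa [act_inv_apply]

theorem two_smul_reynolds [Fintype G] (hG : (Fintype.card G : K) ≠ 0) (hn : 0 < n)
    (hζ : IsPrimitiveRoot ζ (2 * n)) (hab : Subgroup.closure {a, b} = ⊤)
    (ha : (ρ a).val = Matrix.diagonal ![ζ, ζ⁻¹]) (hb : (ρ b).val = !![0, 1; -1, 0]) :
    (2 : K) • reynolds (act ρ) (X 0 ^ (2 * n + 1) * X 1) =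
      X 0 ^ (2 * n + 1) * X 1 - X 1 ^ (2 * n + 1) * X 0 := by
  have hbX : polyAct ρ b (X 0 ^ (2 * n + 1) * X 1) = -(X 1 ^ (2 * n + 1) * X 0) := by
    simp [polyAct_of_val_eq_antidiagonal hb, swapVars]
  have hζ0 : ζ ≠ 0 := hζ.ne_zero (by omega)
  have hpow : (C ζ : MvPolynomial (Fin 2) K) ^ (2 * n + 1) * C ζ⁻¹ = 1 := by
    rw [← C_pow, ← C_mul, pow_succ, hζ.pow_eq_one, one_mul, mul_inv_cancel₀ hζ0, C_1]
  have hpow' : (C ζ⁻¹ : MvPolynomial (Fin 2) K) ^ (2 * n + 1) * C ζ = 1 := by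
    rw [← C_pow, ← C_mul, pow_succ, inv_pow, hζ.pow_eq_one, inv_one, one_mul,
      inv_mul_cancel₀ hζ0, C_1]
  have hinv : X 0 ^ (2 * n + 1) * X 1 - X 1 ^ (2 * n + 1) * X 0 ∈ invariants (act ρ) := by
    refine mem_invariants_act_of_closure_eq_top hab ?_ ?_
    · simp only [polyAct_of_val_eq_diagonal ha, map_sub, map_mul, map_pow, aeval_X,
        Matrix.cons_val_zero, Matrix.cons_val_one, mul_pow]
      linear_combination X 0 ^ (2 * n + 1) * X 1 * hpow - X 1 ^ (2 * n + 1) * X 0 * hpow'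
    · simp [polyAct_of_val_eq_antidiagonal hb, swapVars, (odd_two_mul_add_one n).neg_pow]
      ring
  rw [← reynolds_of_mem hG hinv, sub_eq_add_neg, ← hbX, ← act_inv_apply, map_add, reynolds_act,
    two_smul]

theorem reynolds_notMem_adjoinInvariantsLe [Fintype G] (hG : (Fintype.card G : K) ≠ 0)
    (h2 : (2 : K) ≠ 0) (hn : 0 < n) (hζ : IsPrimitiveRoot ζ (2 * n))
    (hab : Subgroup.closure {a, b} = ⊤)
    (ha : (ρ a).val = Matrix.diagonal ![ζ, ζ⁻¹]) (hb : (ρ b).val = !![0, 1; -1, 0]) :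
    reynolds (act ρ) (X 0 ^ (2 * n + 1) * X 1) ∉ adjoinInvariantsLe (act ρ) (2 * n + 1) := by
  intro hmem
  have hsymm : swapVars K _ = _ := adjoinInvariantsLe_le_equalizer_swapVars hn hζ ha hb hmem
  have hswap := congrArg (fun P => (2 : K) • P) hsymm
  simp only [← map_smul, two_smul_reynolds hG hn hζ hab ha hb, swapVars, map_sub, map_mul, map_pow,
    rename_X, Equiv.swap_apply_left, Equiv.swap_apply_right, AlgHom.id_apply] at hswap
  have heq : (2 : K) • (X 0 ^ (2 * n + 1) * X 1 : MvPolynomial (Fin 2) K) =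
      (2 : K) • (X 1 ^ (2 * n + 1) * X 0) := by
    rw [two_smul, two_smul]
    linear_combination -hswap
  have hX (i j : Fin 2) : (X i ^ (2 * n + 1) * X j : MvPolynomial (Fin 2) K) =
      monomial (Finsupp.single i (2 * n + 1) + Finsupp.single j 1) 1 := by
    rw [X_pow_eq_monomial, X, monomial_mul, one_mul]
  have hexp := DFunLike.congr_fun (monomial_left_injective one_ne_zero
    ((hX 0 1).symm.trans ((smul_right_injective _ h2 heq).trans (hX 1 0)))) 0
  exact hn.ne' (by simpa using hexp)

theorem exists_representation_of_isDicyclicPair [Finite G] (h : IsDicyclicPair n a b) (hn : n ≠ 1)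
    (hab : Subgroup.closure {a, b} = ⊤) (hζ : IsPrimitiveRoot ζ (2 * n)) :
    ∃ ρ : G →* Matrix.GeneralLinearGroup (Fin 2) K,
      (ρ a).val = Matrix.diagonal ![ζ, ζ⁻¹] ∧ (ρ b).val = !![0, 1; -1, 0] := by
  have hpos := h.pos
  have hζ0 : ζ ≠ 0 := hζ.ne_zero (by omega)
  have hζn : ζ ^ n = -1 := by
    refine (sq_eq_one_iff.1 ?_).resolve_left
      (hζ.pow_ne_one_of_pos_of_lt hpos.ne' (by omega))
    rw [← pow_mul, mul_comm, hζ.pow_eq_one]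
  let x := Matrix.GeneralLinearGroup.mkOfDetNeZero (Matrix.diagonal ![ζ, ζ⁻¹]) (by simp [hζ0])
  let y := Matrix.GeneralLinearGroup.mkOfDetNeZero (!![0, 1; -1, 0] : Matrix (Fin 2) (Fin 2) K)
    (by simp)
  have hsq : y ^ 2 = x ^ n := Units.ext <| by
    change !![0, 1; -1, 0] ^ 2 = Matrix.diagonal ![ζ, ζ⁻¹] ^ n
    rw [Matrix.diagonal_pow]
    ext i j
    fin_cases i <;> fin_cases j <;> simp [sq, hζn]
  have hmul : x * (y * x) = y := Units.ext <| by
    change Matrix.diagonal ![ζ, ζ⁻¹] * (!![0, 1; -1, 0] * Matrix.diagonal ![ζ, ζ⁻¹]) =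
      !![0, 1; -1, 0]
    ext i j
    fin_cases i <;> fin_cases j <;> simp [Matrix.vecMul_diagonal, hζ0]
  obtain ⟨ρ, hρa, hρb⟩ := h.exists_hom hn hab hsq
    (mul_inv_eq_iff_eq_mul.2 (eq_inv_mul_of_mul_eq hmul))
  exact ⟨ρ, by rw [hρa]; rfl, by rw [hρb]; rfl⟩

end BinaryForms

theorem totalDegree_aeval_le {R S σ τ : Type*} [CommSemiring R]
    [CommSemiring S] [Algebra R S] {v : σ → MvPolynomial τ S}
    (hv : ∀ i, (v i).totalDegree ≤ 1) (f : MvPolynomial σ R) :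
    (aeval v f).totalDegree ≤ f.totalDegree := by
  rw [aeval_def, eval₂_eq]
  refine totalDegree_finsetSum_le fun m hm => (totalDegree_mul _ _).trans ?_
  rw [MvPolynomial.algebraMap_apply, totalDegree_C, zero_add]
  refine (totalDegree_finsetProd _ _).trans
    ((Finset.sum_le_sum fun i _ => ?_).trans (le_totalDegree hm))
  simpa using (totalDegree_pow _ _).trans (Nat.mul_le_mul_left (m i) (hv i))

section RegularRepresentation

/-- The regular representation, with coordinates numbered by `e`: the variable `X (e h)` goes to
`X (e (h * g))` under `polyAct`. -/
noncomputable def regularRep (F : Type*) [Field F] {G : Type*} [Group G] {N : ℕ} (e : G ≃ Fin N) :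
    G →* Matrix.GeneralLinearGroup (Fin N) F :=
  MonoidHom.toHomUnits
    { toFun g := Matrix.of fun i j => if j = e (e.symm i * g) then 1 else 0
      map_one' := by
        ext i j
        simp [Matrix.one_apply, eq_comm]
      map_mul' g h := by
        ext i j
        simp only [Matrix.of_apply, Matrix.mul_apply, ite_mul, one_mul,
          zero_mul, Finset.sum_ite_eq', Finset.mem_univ, if_true, Equiv.symm_apply_apply,
          mul_assoc] }

variable {F K : Type*} [Field F] [Field K] {G : Type*} [Group G] {N : ℕ}
  (e : G ≃ Fin N)

theorem act_regularRep_X (g h : G) :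
    act (regularRep F e) g (X (e h)) = X (e (h * g⁻¹)) := by
  suffices ∀ g, act (regularRep F e) g⁻¹ (X (e h)) = X (e (h * g)) by simpa using this g⁻¹
  intro g
  rw [act_inv_apply]
  simp [polyAct, regularRep, MonoidHom.coe_toHomUnits]

variable {S : Type*} [CommRing S] [Algebra K S] [Algebra F S]

/-- The algebra homomorphism from the polynomial functions of the regular representation that
sends the variables to the orbit of `u`. -/
noncomputable def orbitHom (B : G →* (S →ₐ[K] S)) (u : S) : MvPolynomial (Fin N) F →ₐ[F] S :=
  aeval fun i => B (e.symm i)⁻¹ u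

theorem orbitHom_X (B : G →* (S →ₐ[K] S)) (u : S) (g : G) :
    orbitHom e B u (X (e g) : MvPolynomial (Fin N) F) = B g⁻¹ u := by
  simp [orbitHom]

variable [Algebra F K]

theorem orbitHom_act [IsScalarTower F K S] (B : G →* (S →ₐ[K] S)) (u : S) (g : G)
    (f : MvPolynomial (Fin N) F) :
    orbitHom e B u (act (regularRep F e) g f) = B g (orbitHom e B u f) := by
  have hcomp : (orbitHom e B u).comp (act (regularRep F e) g) =
      ((B g).restrictScalars F).comp (orbitHom e B u) := algHom_ext fun i => by
    obtain ⟨h, rfl⟩ := e.surjective i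
    simp [act_regularRep_X, orbitHom_X]
  exact DFunLike.congr_fun hcomp f

variable {τ : Type*} {B : G →* (MvPolynomial τ K →ₐ[K] MvPolynomial τ K)} {s : ℕ}
  {u : MvPolynomial τ K}

theorem orbitHom_mem_adjoinInvariantsLe (hB : IsLinearAction B) (hu : u.IsHomogeneous 1)
    {f : MvPolynomial (Fin N) F} (hf : f ∈ adjoinInvariantsLe (act (regularRep F e)) s) :
    orbitHom e B u f ∈ adjoinInvariantsLe B s := by
  suffices adjoinInvariantsLe (act (regularRep F e)) s ≤
      ((adjoinInvariantsLe B s).restrictScalars F).comap (orbitHom e B u) from this hf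
  refine Algebra.adjoin_le fun P hP => Algebra.subset_adjoin ⟨?_, ?_⟩
  · exact mem_invariants.2 fun g => (orbitHom_act e B u g P).symm.trans
      (congrArg _ (mem_invariants.1 hP.1 g))
  · exact (totalDegree_aeval_le (fun i => (hB.map_isHomogeneous _ hu).totalDegree_le) P).trans hP.2

theorem reynolds_orbitHom_mem_adjoinInvariantsLe [Fintype G] (hB : IsLinearAction B)
    (hu : u.IsHomogeneous 1) (hs : NoetherBoundLe (regularRep F e) s)
    (f : MvPolynomial (Fin N) F) : reynolds B (orbitHom e B u f) ∈ adjoinInvariantsLe B s := by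
  rw [← map_reynolds (orbitHom e B u) (orbitHom_act e B u)]
  exact orbitHom_mem_adjoinInvariantsLe e hB hu
    ((noetherBoundLe_iff _).1 hs (reynolds_mem_invariants _ f))

end RegularRepresentation

section LowerBound

variable {F K : Type*} [Field F] [Field K] [Algebra F K] {G : Type*} [Group G] [Fintype G] {n : ℕ}
  {a b : G}

theorem IsDicyclicPair.not_noetherBoundLe_regularRep {N : ℕ} (e : G ≃ Fin N)
    (hK : (Fintype.card G : K) ≠ 0) (h2 : (2 : K) ≠ 0) {ζ : K} (hζ : IsPrimitiveRoot ζ (2 * n))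
    (h : IsDicyclicPair n a b) (hn : n ≠ 1) (hab : Subgroup.closure {a, b} = ⊤) :
    ¬ NoetherBoundLe (regularRep F e) (2 * n + 1) := by
  intro hs
  obtain ⟨ρ, ha, hb⟩ := exists_representation_of_isDicyclicPair h hn hab hζ
  have hX : act ρ b⁻¹ (X 0) = X 1 := by
    simp [act_inv_apply, polyAct_of_val_eq_antidiagonal hb, swapVars]
  refine reynolds_notMem_adjoinInvariantsLe hK h2 h.pos hζ hab ha hb ?_
  have himage : orbitHom e (act ρ) (X 0) (X (e 1) ^ (2 * n + 1) * X (e b) : MvPolynomial _ F) =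
      X 0 ^ (2 * n + 1) * X 1 := by
    rw [map_mul, map_pow, orbitHom_X, orbitHom_X, hX, inv_one, map_one, AlgHom.one_apply]
  rw [← himage]
  exact reynolds_orbitHom_mem_adjoinInvariantsLe e (isLinearAction_act ρ) (isHomogeneous_X K 0) hs _

theorem exists_not_noetherBoundLe_of_isDicyclic (hF : (Fintype.card G : F) ≠ 0)
    (hG : IsDicyclic G) : ∃ (d : ℕ) (ρ : G →* Matrix.GeneralLinearGroup (Fin d) F),
      ¬ NoetherBoundLe ρ (Fintype.card G / 2 + 1) := by
  obtain ⟨a, b, n, hn, ha, hb, hconj, hab⟩ := hG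
  have h : IsDicyclicPair n a b := ⟨ha, hb, hconj⟩
  have hcard : Fintype.card G = 2 * (2 * n) := by
    rw [← Nat.card_eq_fintype_card, h.card_eq hn.ne' hab]
    ring
  have hK := natCast_ne_zero_of_algebra (AlgebraicClosure F) hF
  obtain ⟨h2, h2n⟩ : (2 : AlgebraicClosure F) ≠ 0 ∧ ((2 * n : ℕ) : AlgebraicClosure F) ≠ 0 := by
    rwa [hcard, Nat.cast_mul, mul_ne_zero_iff, Nat.cast_two] at hK
  have : NeZero ((2 * n : ℕ) : AlgebraicClosure F) := ⟨h2n⟩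
  obtain ⟨ζ, hζ⟩ := HasEnoughRootsOfUnity.exists_primitiveRoot (AlgebraicClosure F) (2 * n)
  refine ⟨_, regularRep F (Fintype.equivFin G), ?_⟩
  rw [show Fintype.card G / 2 = 2 * n by omega]
  exact h.not_noetherBoundLe_regularRep _ hK h2 hζ hn.ne' hab

end LowerBound

end NoetherNumber

/-- For a non-cyclic nilpotent group `G` with smallest prime divisor `p` of `|G|`,
`β(G) ≤ |G|/p + p − 1`, except if `p = 2` and `G` is dicyclic, in which case
`β(G) = |G|/2 + 2`. -/
theorem noether_bound_nilpotent {G : Type*} [Group G] [Fintype G]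
    (hnc : ¬ IsCyclic G) (hnil : Group.IsNilpotent G)
    (p : ℕ) (hp : p.Prime) (hpdvd : p ∣ Fintype.card G)
    (hmin : ∀ q : ℕ, q.Prime → q ∣ Fintype.card G → p ≤ q)
    (F : Type*) [Field F] (hF : ¬ (ringChar F ∣ Fintype.card G)) :
    (¬ (p = 2 ∧ IsDicyclic G) →
      ∀ (d : ℕ) (ρ : G →* Matrix.GeneralLinearGroup (Fin d) F),
        NoetherBoundLe ρ (Fintype.card G / p + p - 1)) ∧
    ((p = 2 ∧ IsDicyclic G) →
      (∀ (d : ℕ) (ρ : G →* Matrix.GeneralLinearGroup (Fin d) F),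
        NoetherBoundLe ρ (Fintype.card G / 2 + 2)) ∧
      ∃ (d : ℕ) (ρ : G →* Matrix.GeneralLinearGroup (Fin d) F),
        ¬ NoetherBoundLe ρ (Fintype.card G / 2 + 1)) := by
  have hF' : (Fintype.card G : F) ≠ 0 := fun h => hF ((ringChar.spec F _).1 h)
  refine ⟨fun hdic d ρ => (NoetherNumber.noetherBoundLe_iff ρ).2 ?_, ?_⟩
  · exact NoetherNumber.invariants_le_of_not_isDicyclic hnc hp hpdvd hmin hdic
      (NoetherNumber.isLinearAction_act ρ) hF'
  · rintro ⟨rfl, hdic⟩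
    refine ⟨fun d ρ => (NoetherNumber.noetherBoundLe_iff ρ).2 ?_,
      NoetherNumber.exists_not_noetherBoundLe_of_isDicyclic hF' hdic⟩
    exact NoetherNumber.invariants_le_of_two_dvd_card hnc hpdvd
      (NoetherNumber.isLinearAction_act ρ) hF'
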